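/- Let d ≥ 1, set s_d = d(d+1)/2, and let g be a real-analytic Riemannian metric on an open set Ω ⊆ ℝ^d containing a point p. Then there exist an open neighborhood U of p with U ⊆ Ω and an injective real-analytic map u : U → ℝ^{s_d} with (∇u(x))ᵀ ∇u(x) = g(x) for all x ∈ U; that is, every analytic d-dimensional metric admits a local analytic isometric embedding into the Janet dimension s_d. (Janet–Cartan theorem.) -/

import Mathlib

noncomputable section
open Matrix Set

attribute [local instance] Matrix.normedAddCommGroup Matrix.normedSpace

/-- The Jacobian matrix (n×d) of a map `u : ℝᵈ → ℝⁿ` at a point `x`. -/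
def Jac {d n : ℕ} (u : EuclideanSpace ℝ (Fin d) → EuclideanSpace ℝ (Fin n))
    (x : EuclideanSpace ℝ (Fin d)) : Matrix (Fin n) (Fin d) ℝ :=
  Matrix.of fun i j => fderiv ℝ u x (EuclideanSpace.single j 1) i

namespace JanetCartan

open scoped ENNReal NNReal Topology

/-- Formal power series in `d` variables with real coefficients. -/
abbrev PS (d : ℕ) : Type := MvPowerSeries (Fin d) ℝ

/-! ### Weighted `ℓ¹` norms of power series -/

/-- The `ℓ¹` norm of the coefficients of a power series with respect to a weight. -/
def wnorm {d : ℕ} (W : (Fin d →₀ ℕ) → ℝ≥0∞) (f : PS d) : ℝ≥0∞ :=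
  ∑' α, ‖MvPowerSeries.coeff α f‖ₑ * W α

section wnorm

variable {d : ℕ} {W W' : (Fin d →₀ ℕ) → ℝ≥0∞}

theorem wnorm_zero : wnorm W (0 : PS d) = 0 := by simp [wnorm]

theorem wnorm_add_le (f g : PS d) : wnorm W (f + g) ≤ wnorm W f + wnorm W g := by
  unfold wnorm
  rw [← ENNReal.tsum_add]
  refine ENNReal.tsum_le_tsum fun α => ?_
  rw [← add_mul, map_add]
  gcongr
  exact enorm_add_le _ _

theorem wnorm_neg (f : PS d) : wnorm W (-f) = wnorm W f := by
  unfold wnorm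
  refine tsum_congr fun α => ?_
  rw [map_neg, enorm_neg]

theorem wnorm_sub_le (f g : PS d) : wnorm W (f - g) ≤ wnorm W f + wnorm W g := by
  rw [sub_eq_add_neg, ← wnorm_neg g]
  exact wnorm_add_le _ _

theorem wnorm_smul (c : ℝ) (f : PS d) : wnorm W (c • f) = ‖c‖ₑ * wnorm W f := by
  unfold wnorm
  rw [← ENNReal.tsum_mul_left]
  refine tsum_congr fun α => ?_
  rw [map_smul, smul_eq_mul, enorm_mul, mul_assoc]

theorem wnorm_sum_le {ι : Type*} (s : Finset ι) (f : ι → PS d) :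
    wnorm W (∑ i ∈ s, f i) ≤ ∑ i ∈ s, wnorm W (f i) :=
  Finset.le_sum_of_subadditive (wnorm W) wnorm_zero.le wnorm_add_le s f

theorem wnorm_mono (h : ∀ α, W α ≤ W' α) (f : PS d) : wnorm W f ≤ wnorm W' f :=
  ENNReal.tsum_le_tsum fun α => by gcongr; exact h α

theorem wnorm_eq_zero (hW : ∀ α, W α ≠ 0) {f : PS d} (hf : wnorm W f = 0) : f = 0 := by
  ext α
  have := ENNReal.tsum_eq_zero.1 hf α
  simpa [hW α] using this

theorem enorm_coeff_mul_le (f : PS d) (α : Fin d →₀ ℕ) :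
    ‖MvPowerSeries.coeff α f‖ₑ * W α ≤ wnorm W f :=
  ENNReal.le_tsum (f := fun α => ‖MvPowerSeries.coeff α f‖ₑ * W α) α

theorem wnorm_mul_le (hW : ∀ α β, W (α + β) ≤ W α * W β) (f g : PS d) :
    wnorm W (f * g) ≤ wnorm W f * wnorm W g := by
  have key : wnorm W f * wnorm W g =
      ∑' α, ∑ x ∈ Finset.HasAntidiagonal.antidiagonal α, (‖MvPowerSeries.coeff x.1 f‖ₑ * W x.1) *
        (‖MvPowerSeries.coeff x.2 g‖ₑ * W x.2) := by
    unfold wnorm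
    conv_rhs => enter [1, α]; rw [← Finset.sum_finset_coe, ← tsum_fintype (L := .unconditional _)]
    refine Eq.trans ?_ (ENNReal.tsum_sigma'
      (fun x : Σ α : Fin d →₀ ℕ, Finset.HasAntidiagonal.antidiagonal α =>
        (‖MvPowerSeries.coeff x.2.1.1 f‖ₑ * W x.2.1.1) *
          (‖MvPowerSeries.coeff x.2.1.2 g‖ₑ * W x.2.1.2)))
    rw [← Finset.HasAntidiagonal.sigmaAntidiagonalEquivProd.symm.tsum_eq, ENNReal.tsum_prod',
      ← ENNReal.tsum_mul_right]
    refine tsum_congr fun α => ?_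
    rw [← ENNReal.tsum_mul_left]
    rfl
  rw [key]
  refine ENNReal.tsum_le_tsum fun α => ?_
  rw [MvPowerSeries.coeff_mul]
  calc _ ≤ (∑ x ∈ Finset.HasAntidiagonal.antidiagonal α,
        ‖MvPowerSeries.coeff x.1 f * MvPowerSeries.coeff x.2 g‖ₑ) * W α := by
        gcongr
        exact enorm_sum_le _ _
    _ = ∑ x ∈ Finset.HasAntidiagonal.antidiagonal α,
        ‖MvPowerSeries.coeff x.1 f * MvPowerSeries.coeff x.2 g‖ₑ * W α := Finset.sum_mul _ _ _
    _ ≤ _ := by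
        refine Finset.sum_le_sum fun x hx => ?_
        rw [Finset.HasAntidiagonal.mem_antidiagonal] at hx
        rw [← hx, enorm_mul, mul_mul_mul_comm]
        gcongr
        exact hW _ _

/-- A coefficientwise operator bound. -/
theorem wnorm_le_of_coeff {S : Type*} {e e' : S → (Fin d →₀ ℕ)} (he : Function.Injective e)
    (he' : Function.Injective e') {C : ℝ≥0∞} {f g : PS d}
    (hg : ∀ α, α ∉ Set.range e → MvPowerSeries.coeff α g = 0)
    (h : ∀ s, ‖MvPowerSeries.coeff (e s) g‖ₑ * W (e s) ≤
      C * (‖MvPowerSeries.coeff (e' s) f‖ₑ * W' (e' s))) :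
    wnorm W g ≤ C * wnorm W' f := by
  have h1 : wnorm W g = ∑' s, ‖MvPowerSeries.coeff (e s) g‖ₑ * W (e s) := by
    unfold wnorm
    rw [he.tsum_eq (f := fun α => ‖MvPowerSeries.coeff α g‖ₑ * W α)]
    intro α hα
    by_contra hn
    simp [hg α hn] at hα
  rw [h1]
  calc _ ≤ ∑' s, C * (‖MvPowerSeries.coeff (e' s) f‖ₑ * W' (e' s)) := ENNReal.tsum_le_tsum h
    _ = C * ∑' s, (‖MvPowerSeries.coeff (e' s) f‖ₑ * W' (e' s)) := ENNReal.tsum_mul_left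
    _ ≤ _ := by
      gcongr
      exact ENNReal.tsum_comp_le_tsum_of_injective he' fun α => ‖MvPowerSeries.coeff α f‖ₑ * W' α

end wnorm

/-! ### Vectors of power series -/

/-- The sum of the weighted norms of the components of a vector of power series. -/
def vnorm {d : ℕ} {ι : Type*} [Fintype ι] (W : (Fin d →₀ ℕ) → ℝ≥0∞) (y : ι → PS d) : ℝ≥0∞ :=
  ∑ i, wnorm W (y i)

/-- The dot product of vectors of power series. -/
def dot {d : ℕ} {ι : Type*} [Fintype ι] (u v : ι → PS d) : PS d := ∑ i, u i * v i

section vnorm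

variable {d : ℕ} {ι : Type*} [Fintype ι] {W W' : (Fin d →₀ ℕ) → ℝ≥0∞}

theorem vnorm_zero : vnorm W (0 : ι → PS d) = 0 := by simp [vnorm, wnorm_zero]

theorem wnorm_le_vnorm (y : ι → PS d) (i : ι) : wnorm W (y i) ≤ vnorm W y :=
  Finset.single_le_sum (f := fun i => wnorm W (y i)) (fun _ _ => zero_le) (Finset.mem_univ i)

theorem vnorm_add_le (y z : ι → PS d) : vnorm W (y + z) ≤ vnorm W y + vnorm W z := by
  unfold vnorm
  rw [← Finset.sum_add_distrib]
  exact Finset.sum_le_sum fun i _ => wnorm_add_le _ _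

theorem vnorm_neg (y : ι → PS d) : vnorm W (-y) = vnorm W y := by
  simp [vnorm, wnorm_neg]

theorem vnorm_sub_le (y z : ι → PS d) : vnorm W (y - z) ≤ vnorm W y + vnorm W z := by
  rw [sub_eq_add_neg, ← vnorm_neg z]
  exact vnorm_add_le _ _

theorem vnorm_eq_zero (hW : ∀ α, W α ≠ 0) {y : ι → PS d} (hy : vnorm W y = 0) : y = 0 := by
  funext i
  exact wnorm_eq_zero hW (nonpos_iff_eq_zero.1 (hy ▸ wnorm_le_vnorm y i))

theorem vnorm_sum_le {κ : Type*} (s : Finset κ) (y : κ → ι → PS d) :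
    vnorm W (∑ k ∈ s, y k) ≤ ∑ k ∈ s, vnorm W (y k) :=
  Finset.le_sum_of_subadditive (vnorm W) vnorm_zero.le vnorm_add_le s y

theorem vnorm_le_of_forall {C : ℝ≥0∞} {y z : ι → PS d}
    (h : ∀ i, wnorm W (y i) ≤ C * wnorm W (z i)) : vnorm W y ≤ C * vnorm W z := by
  unfold vnorm
  rw [Finset.mul_sum]
  exact Finset.sum_le_sum fun i _ => h i

theorem wnorm_dot_le (hW : ∀ α β, W (α + β) ≤ W α * W β) (u v : ι → PS d) :
    wnorm W (dot u v) ≤ vnorm W u * vnorm W v := by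
  refine (wnorm_sum_le _ _).trans ?_
  unfold vnorm
  rw [Finset.sum_mul]
  refine Finset.sum_le_sum fun i _ => (wnorm_mul_le hW _ _).trans ?_
  gcongr
  exact wnorm_le_vnorm v i

theorem dot_add_left (u v w : ι → PS d) : dot (u + v) w = dot u w + dot v w := by
  simp [dot, add_mul, Finset.sum_add_distrib]

theorem dot_add_right (u v w : ι → PS d) : dot u (v + w) = dot u v + dot u w := by
  simp [dot, mul_add, Finset.sum_add_distrib]

theorem dot_sub_left (u v w : ι → PS d) : dot (u - v) w = dot u w - dot v w := by
  simp [dot, sub_mul, Finset.sum_sub_distrib]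

theorem dot_sub_right (u v w : ι → PS d) : dot u (v - w) = dot u v - dot u w := by
  simp [dot, mul_sub, Finset.sum_sub_distrib]

theorem dot_comm (u v : ι → PS d) : dot u v = dot v u := by
  simp [dot, mul_comm]

theorem exists_sum_of_vnorm_summable (hW : ∀ α, W α ≠ 0) (δ : ℕ → ι → PS d)
    (hδ : ∑' n, vnorm W (δ n) ≠ ∞) :
    ∃ y : ι → PS d, ∀ n, vnorm W (y - ∑ j ∈ Finset.range n, δ j) ≤ ∑' j, vnorm W (δ (j + n)) := by
  have hs : ∀ i α, Summable fun n => MvPowerSeries.coeff α (δ n i) := by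
    intro i α
    refine Summable.of_enorm ?_
    intro htop
    apply hδ
    rw [eq_top_iff]
    calc ∞ = (∑' n, ‖MvPowerSeries.coeff α (δ n i)‖ₑ) * W α := by
          rw [htop, ENNReal.top_mul (hW α)]
      _ = ∑' n, ‖MvPowerSeries.coeff α (δ n i)‖ₑ * W α := ENNReal.tsum_mul_right.symm
      _ ≤ _ := ENNReal.tsum_le_tsum fun n =>
          (enorm_coeff_mul_le _ _).trans (wnorm_le_vnorm _ _)
  let Y : ι → PS d := fun i α => ∑' n, MvPowerSeries.coeff α (δ n i)
  refine ⟨Y, fun n => ?_⟩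
  have hcoeff : ∀ i α, ‖MvPowerSeries.coeff α ((Y - ∑ j ∈ Finset.range n, δ j) i)‖ₑ ≤
      ∑' j, ‖MvPowerSeries.coeff α (δ (j + n) i)‖ₑ := by
    intro i α
    have h1 : MvPowerSeries.coeff α ((Y - ∑ j ∈ Finset.range n, δ j) i) =
        ∑' j, MvPowerSeries.coeff α (δ (j + n) i) := by
      rw [Pi.sub_apply, map_sub, Finset.sum_apply, map_sum, sub_eq_iff_eq_add',
        (hs i α).sum_add_tsum_nat_add n]
      rfl
    rw [h1]
    exact enorm_tsum_le_tsum_enorm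
  unfold vnorm
  calc _ ≤ ∑ i, ∑' j, wnorm W (δ (j + n) i) := by
        refine Finset.sum_le_sum fun i _ => ?_
        unfold wnorm
        rw [ENNReal.tsum_comm]
        refine ENNReal.tsum_le_tsum fun α => ?_
        rw [ENNReal.tsum_mul_right]
        gcongr
        exact hcoeff i α
    _ = _ := by
      rw [← Summable.tsum_finsetSum fun _ _ => ENNReal.summable]

theorem exists_fixedPoint (hW : ∀ α, W α ≠ 0) (Φ : (ι → PS d) → ι → PS d) {c : ℝ≥0∞}
    (hc : c ≠ ∞) (h0 : vnorm W (Φ 0) ≤ c)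
    (hΦ : ∀ y z, vnorm W y ≤ 2 * c → vnorm W z ≤ 2 * c →
      vnorm W (Φ y - Φ z) ≤ 2⁻¹ * vnorm W (y - z)) :
    ∃ y, vnorm W y ≤ 2 * c ∧ Φ y = y := by
  set s : ℕ → ι → PS d := fun n => Φ^[n] 0 with hs
  have hs0 : s 0 = 0 := rfl
  have hsucc : ∀ n, s (n + 1) = Φ (s n) := fun n => Function.iterate_succ_apply' Φ n 0
  set δ : ℕ → ι → PS d := fun n => s (n + 1) - s n with hδdef
  have hsum : ∀ n, ∑ j ∈ Finset.range n, δ j = s n := fun n => by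
    rw [Finset.sum_range_sub, hs0, sub_zero]
  have hgeo : ∑' n : ℕ, (2⁻¹ : ℝ≥0∞) ^ n * c = 2 * c := by
    rw [ENNReal.tsum_mul_right, ENNReal.tsum_geometric, ENNReal.one_sub_inv_two, inv_inv]
  have hδ : ∀ n, vnorm W (s n) ≤ 2 * c ∧ vnorm W (δ n) ≤ (2⁻¹ : ℝ≥0∞) ^ n * c := by
    intro n
    induction n using Nat.strong_induction_on with
    | _ n ih =>
      have hsn : vnorm W (s n) ≤ 2 * c := by
        rw [← hsum n, ← hgeo]
        refine (vnorm_sum_le _ _).trans ?_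
        refine (Finset.sum_le_sum fun k hk => (ih k (Finset.mem_range.1 hk)).2).trans ?_
        exact ENNReal.sum_le_tsum _
      refine ⟨hsn, ?_⟩
      rcases n with _ | n
      · simpa [hδdef, hs0, hsucc] using h0
      · have : δ (n + 1) = Φ (s (n + 1)) - Φ (s n) := by simp only [hδdef, hsucc]
        rw [this]
        refine (hΦ _ _ hsn (ih n (Nat.lt_succ_self n)).1).trans ?_
        rw [pow_succ', mul_assoc]
        gcongr
        exact (ih n (Nat.lt_succ_self n)).2
  have htot : ∑' n, vnorm W (δ n) ≤ 2 * c :=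
    (ENNReal.tsum_le_tsum fun n => (hδ n).2).trans hgeo.le
  obtain ⟨y, hy⟩ := exists_sum_of_vnorm_summable hW δ
    (ne_top_of_le_ne_top (ENNReal.mul_ne_top (by simp) hc) htot)
  simp only [hsum] at hy
  have hy2 : vnorm W y ≤ 2 * c := by
    have := hy 0
    simp only [hs0, sub_zero, add_zero] at this
    exact this.trans htot
  have htail : ∀ n, vnorm W (y - s n) ≤ (2⁻¹ : ℝ≥0∞) ^ n * (2 * c) := by
    intro n
    refine (hy n).trans ?_
    rw [← hgeo, ← ENNReal.tsum_mul_left]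
    refine ENNReal.tsum_le_tsum fun j => (hδ _).2.trans_eq ?_
    rw [pow_add]; ring
  refine ⟨y, hy2, ?_⟩
  rw [← sub_eq_zero]
  apply vnorm_eq_zero hW
  have hle : ∀ n : ℕ, vnorm W (Φ y - y) ≤ (2⁻¹ : ℝ≥0∞) ^ n * (4 * c) := by
    intro n
    have : Φ y - y = (Φ y - Φ (s n)) - (y - s (n + 1)) := by rw [hsucc]; abel
    rw [this]
    calc _ ≤ vnorm W (Φ y - Φ (s n)) + vnorm W (y - s (n + 1)) := vnorm_sub_le _ _
      _ ≤ 2⁻¹ * ((2⁻¹ : ℝ≥0∞) ^ n * (2 * c)) + (2⁻¹ : ℝ≥0∞) ^ (n + 1) * (2 * c) := by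
          gcongr
          · exact (hΦ _ _ hy2 (hδ n).1).trans (by gcongr; exact htail n)
          · exact htail _
      _ = (2⁻¹ : ℝ≥0∞) ^ n * ((2⁻¹ + 2⁻¹) * 2 * c) := by rw [pow_succ]; ring
      _ = (2⁻¹ : ℝ≥0∞) ^ n * (2 * c) := by rw [ENNReal.inv_two_add_inv_two, one_mul]
      _ ≤ _ := by gcongr; norm_num
  have hlim : Filter.Tendsto (fun n : ℕ => (2⁻¹ : ℝ≥0∞) ^ n * (4 * c)) Filter.atTop (nhds 0) := by
    have := ENNReal.Tendsto.mul_const (b := 4 * c)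
      (ENNReal.tendsto_pow_atTop_nhds_zero_of_lt_one (r := 2⁻¹) (by simp))
      (Or.inr (ENNReal.mul_ne_top (by simp) hc))
    simpa using this
  exact nonpos_iff_eq_zero.1 (ge_of_tendsto' hlim hle)

/-- A quadratic fixed point equation `y = b + L y + Q y y` with small `L` and `Q` has a solution. -/
theorem exists_quadratic_fixedPoint (hW : ∀ α, W α ≠ 0) (b : ι → PS d)
    (L : (ι → PS d) → ι → PS d) (Q : (ι → PS d) → (ι → PS d) → ι → PS d) {l q : ℝ≥0∞}
    (hL : ∀ y z, L (y - z) = L y - L z)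
    (hQl : ∀ y z w, Q (y - z) w = Q y w - Q z w)
    (hQr : ∀ y z w, Q w (y - z) = Q w y - Q w z)
    (hLn : ∀ y, vnorm W (L y) ≤ l * vnorm W y)
    (hQn : ∀ y z, vnorm W (Q y z) ≤ q * vnorm W y * vnorm W z)
    (hb : vnorm W b ≠ ∞) (hl : l ≤ 4⁻¹) (hq : q * vnorm W b ≤ 16⁻¹) :
    ∃ y, vnorm W y ≤ 2 * vnorm W b ∧ y = b + L y + Q y y := by
  have hL0 : L 0 = 0 := by simpa using hL 0 0
  have hQ0 : Q 0 0 = 0 := by simpa using hQl 0 0 0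
  obtain ⟨y, hy, hfix⟩ := exists_fixedPoint hW (fun y => b + L y + Q y y) hb
    (by simp [hL0, hQ0]) (fun y z hy hz => by
      have : b + L y + Q y y - (b + L z + Q z z) = L (y - z) + (Q (y - z) y + Q z (y - z)) := by
        rw [hL, hQl, hQr]; abel
      rw [this]
      calc _ ≤ vnorm W (L (y - z)) + (vnorm W (Q (y - z) y) + vnorm W (Q z (y - z))) :=
            (vnorm_add_le _ _).trans (by gcongr; exact vnorm_add_le _ _)
        _ ≤ 4⁻¹ * vnorm W (y - z) + (q * vnorm W (y - z) * (2 * vnorm W b) +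
              q * (2 * vnorm W b) * vnorm W (y - z)) := by
            gcongr
            · exact (hLn _).trans (by gcongr)
            · exact (hQn _ _).trans (by gcongr)
            · exact (hQn _ _).trans (by gcongr)
        _ = (4⁻¹ + 4 * (q * vnorm W b)) * vnorm W (y - z) := by ring
        _ ≤ (4⁻¹ + 4 * 16⁻¹) * vnorm W (y - z) := by gcongr
        _ = 2⁻¹ * vnorm W (y - z) := by
            congr 1
            rw [← ENNReal.toReal_eq_toReal_iff' (by finiteness) (by finiteness)]
            rw [ENNReal.toReal_add (by finiteness) (by finiteness)]
            simp; norm_num)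
  exact ⟨y, hy, hfix.symm⟩

end vnorm

/-! ### Formal integration, restriction, and differentiation -/

section operators

variable {d : ℕ}

/-- The formal partial derivative. -/
abbrev pd (i : Fin d) : Derivation ℝ (PS d) (PS d) := MvPowerSeries.pderiv ℝ i

theorem coeff_pd (i : Fin d) (f : PS d) (α : Fin d →₀ ℕ) :
    MvPowerSeries.coeff α (pd i f) =
      MvPowerSeries.coeff (α + Finsupp.single i 1) f * (α i + 1) :=
  MvPowerSeries.coeff_pderiv f α

theorem pd_comm (i j : Fin d) (f : PS d) : pd i (pd j f) = pd j (pd i f) := by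
  ext α
  simp only [coeff_pd, add_right_comm α (Finsupp.single i 1) (Finsupp.single j 1)]
  by_cases h : i = j
  · subst h; rfl
  · simp [h, Ne.symm h]
    ring

/-- Formal integration in the direction `t`, with vanishing integration constant. -/
def integ (t : Fin d) : PS d →ₗ[ℝ] PS d where
  toFun f := fun α => MvPowerSeries.coeff (α - Finsupp.single t 1) f / α t
  map_add' f g := by
    funext α
    change _ = (_ : ℝ) + _
    rw [map_add, add_div]
  map_smul' c f := by
    funext α
    change _ = c • (_ : ℝ)
    rw [map_smul, smul_eq_mul, smul_eq_mul, mul_div_assoc]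

theorem coeff_integ (t : Fin d) (f : PS d) (α : Fin d →₀ ℕ) :
    MvPowerSeries.coeff α (integ t f) =
      MvPowerSeries.coeff (α - Finsupp.single t 1) f / α t := rfl

theorem coeff_integ_of_eq_zero {t : Fin d} {α : Fin d →₀ ℕ} (h : α t = 0) (f : PS d) :
    MvPowerSeries.coeff α (integ t f) = 0 := by
  simp [coeff_integ, h]

theorem coeff_add_single_integ (t : Fin d) (f : PS d) (α : Fin d →₀ ℕ) :
    MvPowerSeries.coeff (α + Finsupp.single t 1) (integ t f) =
      MvPowerSeries.coeff α f / (α t + 1) := by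
  simp [coeff_integ]

theorem eq_add_single_of_ne_zero {t : Fin d} {α : Fin d →₀ ℕ} (h : α t ≠ 0) :
    α = (α - Finsupp.single t 1) + Finsupp.single t 1 := by
  rw [tsub_add_cancel_of_le]
  rw [Finsupp.single_le_iff]
  omega

theorem pd_integ_self (t : Fin d) (f : PS d) : pd t (integ t f) = f := by
  ext α
  rw [coeff_pd, coeff_add_single_integ, div_mul_cancel₀]
  positivity

theorem pd_integ_comm {i t : Fin d} (h : i ≠ t) (f : PS d) :
    pd i (integ t f) = integ t (pd i f) := by
  ext α
  rw [coeff_pd]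
  by_cases hα : α t = 0
  · rw [coeff_integ_of_eq_zero hα, coeff_integ_of_eq_zero, zero_mul]
    simp [hα, h]
  · rw [eq_add_single_of_ne_zero hα, add_right_comm, coeff_add_single_integ,
      coeff_add_single_integ, coeff_pd]
    simp [h, Ne.symm h]
    ring

/-- The function underlying `restr`. -/
def restrFun (t : Fin d) (f : PS d) : PS d :=
  fun α => if α t = 0 then MvPowerSeries.coeff α f else 0

theorem coeff_restrFun (t : Fin d) (f : PS d) (α : Fin d →₀ ℕ) :
    MvPowerSeries.coeff α (restrFun t f) = if α t = 0 then MvPowerSeries.coeff α f else 0 := rfl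

/-- Restriction of a power series to the hyperplane where the coordinate `t` vanishes. -/
def restr (t : Fin d) : PS d →+* PS d where
  toFun := restrFun t
  map_zero' := by
    ext α
    simp [coeff_restrFun]
  map_one' := by
    ext α
    rw [coeff_restrFun, MvPowerSeries.coeff_one]
    split_ifs with h1 h2 h3 <;> first | rfl | simp_all
  map_add' f g := by
    ext α
    rw [map_add, coeff_restrFun, coeff_restrFun, coeff_restrFun]
    split_ifs <;> simp
  map_mul' f g := by
    ext α
    rw [coeff_restrFun, MvPowerSeries.coeff_mul, MvPowerSeries.coeff_mul]
    simp only [coeff_restrFun]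
    split_ifs with h
    · refine Finset.sum_congr rfl fun p hp => ?_
      rw [Finset.HasAntidiagonal.mem_antidiagonal] at hp
      rw [← hp, Finsupp.add_apply] at h
      rw [if_pos (by omega), if_pos (by omega)]
    · symm
      refine Finset.sum_eq_zero fun p hp => ?_
      rw [Finset.HasAntidiagonal.mem_antidiagonal] at hp
      rw [← hp, Finsupp.add_apply] at h
      by_cases h1 : p.1 t = 0
      · rw [if_neg (c := p.2 t = 0) (by omega), mul_zero]
      · rw [if_neg h1, zero_mul]

theorem coeff_restr (t : Fin d) (f : PS d) (α : Fin d →₀ ℕ) :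
    MvPowerSeries.coeff α (restr t f) = if α t = 0 then MvPowerSeries.coeff α f else 0 := rfl

theorem restr_integ (t : Fin d) (f : PS d) : restr t (integ t f) = 0 := by
  ext α
  rw [coeff_restr]
  split_ifs with h
  · rw [coeff_integ_of_eq_zero h]; simp
  · simp

theorem restr_restr (t : Fin d) (f : PS d) : restr t (restr t f) = restr t f := by
  ext α
  simp only [coeff_restr]
  split_ifs <;> rfl

theorem pd_restr_self (t : Fin d) (f : PS d) : pd t (restr t f) = 0 := by
  ext α
  simp [coeff_pd, coeff_restr]

theorem pd_restr_comm {i t : Fin d} (h : i ≠ t) (f : PS d) :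
    pd i (restr t f) = restr t (pd i f) := by
  ext α
  simp only [coeff_pd, coeff_restr]
  simp [h]

theorem constantCoeff_restr (t : Fin d) (f : PS d) :
    MvPowerSeries.constantCoeff (restr t f) = MvPowerSeries.constantCoeff f := by
  rw [← MvPowerSeries.coeff_zero_eq_constantCoeff_apply,
    ← MvPowerSeries.coeff_zero_eq_constantCoeff_apply, coeff_restr]
  simp

theorem constantCoeff_integ (t : Fin d) (f : PS d) :
    MvPowerSeries.constantCoeff (integ t f) = 0 := by
  rw [← MvPowerSeries.coeff_zero_eq_constantCoeff_apply, coeff_integ_of_eq_zero (by simp)]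

/-- A power series with vanishing `t`-derivative and vanishing restriction to `t = 0` is zero. -/
theorem eq_zero_of_pd_of_restr {t : Fin d} {f : PS d} (h : pd t f = 0) (h0 : restr t f = 0) :
    f = 0 := by
  ext α
  by_cases hα : α t = 0
  · have := congrArg (MvPowerSeries.coeff α) h0
    rw [coeff_restr, if_pos hα] at this
    simpa using this
  · rw [eq_add_single_of_ne_zero hα]
    have := congrArg (MvPowerSeries.coeff (α - Finsupp.single t 1)) h
    rw [coeff_pd, map_zero] at this
    rw [map_zero]
    refine (mul_eq_zero.1 this).resolve_right ?_
    positivity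

theorem pd_dot {ι : Type*} [Fintype ι] (i : Fin d) (u v : ι → PS d) :
    pd i (dot u v) = dot (fun a => pd i (u a)) v + dot u (fun a => pd i (v a)) := by
  unfold dot
  rw [map_sum, ← Finset.sum_add_distrib]
  refine Finset.sum_congr rfl fun a _ => ?_
  rw [Derivation.leibniz, smul_eq_mul, smul_eq_mul]
  ring

theorem restr_dot {ι : Type*} [Fintype ι] (t : Fin d) (u v : ι → PS d) :
    restr t (dot u v) = dot (fun a => restr t (u a)) (fun a => restr t (v a)) := by
  simp [dot]

theorem constantCoeff_dot {ι : Type*} [Fintype ι] (u v : ι → PS d) :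
    MvPowerSeries.constantCoeff (dot u v) =
      ∑ a, MvPowerSeries.constantCoeff (u a) * MvPowerSeries.constantCoeff (v a) := by
  simp [dot]

end operators

/-! ### Weights -/

section weights

variable {d : ℕ}

/-- The weight `r ^ |α|`. -/
def rweight (d : ℕ) (r : ℝ≥0) (α : Fin d →₀ ℕ) : ℝ≥0∞ := (r : ℝ≥0∞) ^ α.degree

/-- A weight adapted to the direction `t`: for it, both multiplication and the operators
`f ↦ ∂ᵢ ∫ f dt` are bounded. -/
def tweight (t : Fin d) (r ε : ℝ≥0) (α : Fin d →₀ ℕ) : ℝ≥0∞ :=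
  (r : ℝ≥0∞) ^ α.degree * (ε : ℝ≥0∞) ^ α t * ((α.degree.choose (α t) : ℕ) : ℝ≥0∞)⁻¹

theorem rweight_add_le (r : ℝ≥0) (α β : Fin d →₀ ℕ) :
    rweight d r (α + β) ≤ rweight d r α * rweight d r β := by
  simp [rweight, pow_add]

theorem apply_le_degree (α : Fin d →₀ ℕ) (t : Fin d) : α t ≤ α.degree := by
  rw [Finsupp.degree_eq_sum]
  exact Finset.single_le_sum (f := fun i => α i) (fun _ _ => Nat.zero_le _) (Finset.mem_univ t)

theorem apply_add_apply_le_degree (α : Fin d →₀ ℕ) {i t : Fin d} (h : i ≠ t) :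
    α i + α t ≤ α.degree := by
  rw [Finsupp.degree_eq_sum, ← Finset.sum_pair h]
  exact Finset.sum_le_sum_of_subset (Finset.subset_univ _)

theorem choose_ne_zero (α : Fin d →₀ ℕ) (t : Fin d) : α.degree.choose (α t) ≠ 0 :=
  (Nat.choose_pos (apply_le_degree α t)).ne'

theorem tweight_ne_zero (t : Fin d) {r ε : ℝ≥0} (hr : 0 < r) (hε : 0 < ε) (α : Fin d →₀ ℕ) :
    tweight t r ε α ≠ 0 := by
  simp [tweight, hr.ne', hε.ne']

theorem choose_mul_choose_le (m n k l : ℕ) :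
    m.choose k * n.choose l ≤ (m + n).choose (k + l) := by
  rw [Nat.add_choose_eq]
  exact Finset.single_le_sum (f := fun ij : ℕ × ℕ => m.choose ij.1 * n.choose ij.2)
    (fun _ _ => Nat.zero_le _) (a := (k, l)) (by simp)

theorem tweight_add_le (t : Fin d) (r ε : ℝ≥0) (α β : Fin d →₀ ℕ) :
    tweight t r ε (α + β) ≤ tweight t r ε α * tweight t r ε β := by
  have h : (((α + β).degree.choose ((α + β) t) : ℕ) : ℝ≥0∞)⁻¹ ≤
      ((α.degree.choose (α t) : ℕ) : ℝ≥0∞)⁻¹ * ((β.degree.choose (β t) : ℕ) : ℝ≥0∞)⁻¹ := by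
    rw [← ENNReal.mul_inv (by simp) (by simp)]
    rw [ENNReal.inv_le_inv, map_add, Finsupp.add_apply]
    exact_mod_cast choose_mul_choose_le _ _ _ _
  unfold tweight
  calc _ ≤ (r : ℝ≥0∞) ^ (α + β).degree * (ε : ℝ≥0∞) ^ (α + β) t *
        (((α.degree.choose (α t) : ℕ) : ℝ≥0∞)⁻¹ * ((β.degree.choose (β t) : ℕ) : ℝ≥0∞)⁻¹) := by
        gcongr
    _ = _ := by rw [map_add, Finsupp.add_apply, pow_add, pow_add]; ring

theorem tweight_le_rweight (t : Fin d) (r : ℝ≥0) {ε : ℝ≥0} (hε : ε ≤ 1) (α : Fin d →₀ ℕ) :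
    tweight t r ε α ≤ rweight d r α := by
  unfold tweight rweight
  have h1 : (ε : ℝ≥0∞) ^ α t ≤ 1 := pow_le_one₀ zero_le (by exact_mod_cast hε)
  have h2 : ((α.degree.choose (α t) : ℕ) : ℝ≥0∞)⁻¹ ≤ 1 := by
    rw [ENNReal.inv_le_one]
    exact_mod_cast Nat.one_le_iff_ne_zero.2 (choose_ne_zero α t)
  calc _ ≤ (r : ℝ≥0∞) ^ α.degree * 1 * 1 := by gcongr
    _ = _ := by simp

theorem rweight_le_tweight (t : Fin d) (r : ℝ≥0) {ε : ℝ≥0} (hε : ε ≤ 1) (α : Fin d →₀ ℕ) :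
    rweight d (r * ε / 2) α ≤ tweight t r ε α := by
  unfold tweight rweight
  have h1 : (ε : ℝ≥0∞) ^ α.degree ≤ (ε : ℝ≥0∞) ^ α t :=
    pow_le_pow_right_of_le_one' (by exact_mod_cast hε) (apply_le_degree α t)
  have h2 : (2⁻¹ : ℝ≥0∞) ^ α.degree ≤ ((α.degree.choose (α t) : ℕ) : ℝ≥0∞)⁻¹ := by
    rw [← ENNReal.inv_pow, ENNReal.inv_le_inv]
    exact_mod_cast Nat.choose_le_two_pow _ _
  calc _ = (r : ℝ≥0∞) ^ α.degree * (ε : ℝ≥0∞) ^ α.degree * (2⁻¹ : ℝ≥0∞) ^ α.degree := by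
        rw [← mul_pow, ← mul_pow]
        congr 1
        rw [div_eq_mul_inv]
        push_cast
        rfl
    _ ≤ _ := by gcongr

theorem wnorm_integ_le {W : (Fin d →₀ ℕ) → ℝ≥0∞} (hW : ∀ α β, W (α + β) ≤ W α * W β)
    (t : Fin d) (f : PS d) :
    wnorm W (integ t f) ≤ W (Finsupp.single t 1) * wnorm W f := by
  refine wnorm_le_of_coeff (e := fun α => α + Finsupp.single t 1) (e' := id)
    (add_left_injective _) Function.injective_id ?_ ?_
  · intro α hα
    by_cases h : α t = 0
    · exact coeff_integ_of_eq_zero h f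
    · exact absurd ⟨_, (eq_add_single_of_ne_zero h).symm⟩ hα
  · intro α
    rw [coeff_add_single_integ, id]
    calc _ ≤ ‖MvPowerSeries.coeff α f‖ₑ * (W α * W (Finsupp.single t 1)) := by
          gcongr
          · rw [enorm_le_iff_norm_le, norm_div]
            refine div_le_self (norm_nonneg _) ?_
            rw [Real.norm_of_nonneg (by positivity)]
            linarith [Nat.cast_nonneg (α := ℝ) (α t)]
          · exact hW _ _
      _ = _ := by ring

theorem wnorm_pd_integ_le {i t : Fin d} (hit : i ≠ t) (r ε : ℝ≥0) (f : PS d) :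
    wnorm (tweight t r ε) (pd i (integ t f)) ≤ ε * wnorm (tweight t r ε) f := by
  refine wnorm_le_of_coeff (e := fun α => α + Finsupp.single t 1)
    (e' := fun α => α + Finsupp.single i 1)
    (add_left_injective _) (add_left_injective _) ?_ ?_
  · intro α hα
    by_cases h : α t = 0
    · rw [pd_integ_comm hit]
      exact coeff_integ_of_eq_zero h _
    · exact absurd ⟨_, (eq_add_single_of_ne_zero h).symm⟩ hα
  · intro α
    rw [pd_integ_comm hit, coeff_add_single_integ, coeff_pd]
    set a := MvPowerSeries.coeff (α + Finsupp.single i 1) f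
    set n := α.degree with hn
    set k := α t with hk
    have h1 : ‖a * ((α i : ℝ) + 1) / ((k : ℝ) + 1)‖ₑ =
        ‖a‖ₑ * (((α i + 1 : ℕ) : ℝ≥0∞) * (((k + 1 : ℕ) : ℝ≥0∞))⁻¹) := by
      rw [mul_div_assoc, enorm_mul, div_eq_mul_inv, enorm_mul, enorm_inv (by positivity)]
      have : ∀ m : ℕ, ‖(m : ℝ) + 1‖ₑ = ((m + 1 : ℕ) : ℝ≥0∞) := by
        intro m
        rw [← Nat.cast_succ, Real.enorm_natCast]
      rw [this, this]
    have h2 : ((α i + 1 : ℕ) : ℝ≥0∞) * (((k + 1 : ℕ) : ℝ≥0∞))⁻¹ *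
        (((n + 1).choose (k + 1) : ℕ) : ℝ≥0∞)⁻¹ ≤ (((n + 1).choose k : ℕ) : ℝ≥0∞)⁻¹ := by
      have hkn : k ≤ n := apply_le_degree α t
      have hc : (n + 1).choose k ≠ 0 := (Nat.choose_pos (by omega)).ne'
      rw [mul_assoc, ← ENNReal.mul_inv (by simp) (by simp), ← div_eq_mul_inv]
      refine ENNReal.div_le_of_le_mul ?_
      have h3 : ((k + 1 : ℕ) : ℝ≥0∞) * (((n + 1).choose (k + 1) : ℕ) : ℝ≥0∞) =
          (((n + 1).choose k : ℕ) : ℝ≥0∞) * ((n + 1 - k : ℕ) : ℝ≥0∞) := by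
        have := Nat.choose_succ_right_eq (n + 1) k
        rw [mul_comm] at this
        exact_mod_cast this
      rw [h3, ← mul_assoc, ENNReal.inv_mul_cancel (by exact_mod_cast hc) (by simp), one_mul]
      have := apply_add_apply_le_degree α hit
      exact_mod_cast (show α i + 1 ≤ n + 1 - k by omega)
    rw [h1]
    unfold tweight
    simp only [map_add, Finsupp.degree_single, Finsupp.add_apply, Finsupp.single_eq_same,
      Finsupp.single_eq_of_ne hit.symm, add_zero, ← hn, ← hk]
    calc _ = ‖a‖ₑ * (r : ℝ≥0∞) ^ (n + 1) * (ε : ℝ≥0∞) ^ (k + 1) *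
          (((α i + 1 : ℕ) : ℝ≥0∞) * (((k + 1 : ℕ) : ℝ≥0∞))⁻¹ *
          (((n + 1).choose (k + 1) : ℕ) : ℝ≥0∞)⁻¹) := by ring
      _ ≤ ‖a‖ₑ * (r : ℝ≥0∞) ^ (n + 1) * (ε : ℝ≥0∞) ^ (k + 1) *
          (((n + 1).choose k : ℕ) : ℝ≥0∞)⁻¹ := by gcongr
      _ = _ := by rw [pow_succ (ε : ℝ≥0∞)]; ring

theorem tweight_single_self (t : Fin d) (r ε : ℝ≥0) :
    tweight t r ε (Finsupp.single t 1) = r * ε := by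
  simp [tweight]

theorem wnorm_tweight_integ_le (t : Fin d) {r : ℝ≥0} (hr : r ≤ 1) (ε : ℝ≥0) (f : PS d) :
    wnorm (tweight t r ε) (integ t f) ≤ ε * wnorm (tweight t r ε) f := by
  refine (wnorm_integ_le (tweight_add_le t r ε) t f).trans ?_
  rw [tweight_single_self]
  gcongr
  exact mul_le_of_le_one_left zero_le (by exact_mod_cast hr)

end weights

/-! ### Convergent power series -/

section Conv

variable {d : ℕ}

/-- A power series is convergent if its coefficients are absolutely summable against some
geometric weight. -/
def Conv (f : PS d) : Prop := ∃ r : ℝ≥0, 0 < r ∧ wnorm (rweight d r) f ≠ ∞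

theorem rweight_mono {r s : ℝ≥0} (h : r ≤ s) (α : Fin d →₀ ℕ) :
    rweight d r α ≤ rweight d s α := by
  unfold rweight
  gcongr

theorem Conv.eventually {f : PS d} (hf : Conv f) :
    ∀ᶠ r in 𝓝[>] (0 : ℝ≥0), wnorm (rweight d r) f ≠ ∞ := by
  obtain ⟨r, hr, h⟩ := hf
  filter_upwards [Ioc_mem_nhdsGT hr] with s hs
  exact ne_top_of_le_ne_top h (wnorm_mono (rweight_mono hs.2) f)

theorem Conv.of_eventually {f : PS d}
    (hf : ∀ᶠ r in 𝓝[>] (0 : ℝ≥0), wnorm (rweight d r) f ≠ ∞) : Conv f := by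
  obtain ⟨r, hr, hr0⟩ := (hf.and self_mem_nhdsWithin).exists
  exact ⟨r, hr0, hr⟩

theorem Conv.eventually_le {f : PS d} (hf : Conv f)
    (h0 : MvPowerSeries.constantCoeff f = 0) {δ : ℝ≥0∞} (hδ : δ ≠ 0) :
    ∀ᶠ r in 𝓝[>] (0 : ℝ≥0), wnorm (rweight d r) f ≤ δ := by
  obtain ⟨r, hr, h⟩ := hf
  have key : ∀ s : ℝ≥0, s ≤ 1 → wnorm (rweight d (s * r)) f ≤ s * wnorm (rweight d r) f := by
    intro s hs
    refine wnorm_le_of_coeff (e := id) (e' := id) Function.injective_id Function.injective_id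
      (by simp) fun α => ?_
    rcases eq_or_ne α 0 with rfl | hα
    · simp [h0]
    · have : (s : ℝ≥0∞) ^ α.degree ≤ s := by
        refine pow_le_of_le_one zero_le (by exact_mod_cast hs) ?_
        rwa [Ne, Finsupp.degree_eq_zero_iff]
      simp only [rweight, id, ENNReal.coe_mul, mul_pow]
      calc _ ≤ ‖MvPowerSeries.coeff α f‖ₑ * (s * (r : ℝ≥0∞) ^ α.degree) := by gcongr
        _ = _ := by ring
  obtain ⟨s, hs0, hs⟩ : ∃ s : ℝ≥0, 0 < s ∧ s ≤ 1 ∧ s * wnorm (rweight d r) f ≤ δ := by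
    obtain ⟨n, hn0, hn⟩ := ENNReal.exists_nnreal_pos_mul_lt h hδ
    refine ⟨min n 1, lt_min hn0 one_pos, min_le_right _ _, le_trans ?_ hn.le⟩
    gcongr
    exact min_le_left _ _
  filter_upwards [Ioc_mem_nhdsGT (mul_pos hs0 hr)] with x hx
  exact (wnorm_mono (rweight_mono hx.2) f).trans ((key s hs.1).trans hs.2)

theorem Conv.of_tweight {t : Fin d} {r ε : ℝ≥0} (hr : 0 < r) (hε : 0 < ε) (hε1 : ε ≤ 1) {f : PS d}
    (hf : wnorm (tweight t r ε) f ≠ ∞) : Conv f :=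
  ⟨r * ε / 2, by positivity, ne_top_of_le_ne_top hf (wnorm_mono (rweight_le_tweight t r hε1) f)⟩

theorem Conv.zero : Conv (0 : PS d) := ⟨1, one_pos, by simp [wnorm_zero]⟩

theorem Conv.add {f g : PS d} (hf : Conv f) (hg : Conv g) : Conv (f + g) := by
  apply Conv.of_eventually
  filter_upwards [hf.eventually, hg.eventually] with r h1 h2
  exact ne_top_of_le_ne_top (ENNReal.add_ne_top.2 ⟨h1, h2⟩) (wnorm_add_le f g)

theorem Conv.sub {f g : PS d} (hf : Conv f) (hg : Conv g) : Conv (f - g) := by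
  apply Conv.of_eventually
  filter_upwards [hf.eventually, hg.eventually] with r h1 h2
  exact ne_top_of_le_ne_top (ENNReal.add_ne_top.2 ⟨h1, h2⟩) (wnorm_sub_le f g)

theorem Conv.mul {f g : PS d} (hf : Conv f) (hg : Conv g) : Conv (f * g) := by
  apply Conv.of_eventually
  filter_upwards [hf.eventually, hg.eventually] with r h1 h2
  exact ne_top_of_le_ne_top (ENNReal.mul_ne_top h1 h2) (wnorm_mul_le (rweight_add_le r) f g)

theorem Conv.sum {ι : Type*} (s : Finset ι) {f : ι → PS d} (hf : ∀ i, Conv (f i)) :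
    Conv (∑ i ∈ s, f i) := by
  classical
  induction s using Finset.induction_on with
  | empty => simpa using Conv.zero
  | insert a s ha ih => rw [Finset.sum_insert ha]; exact (hf a).add ih

theorem Conv.dot {ι : Type*} [Fintype ι] {u v : ι → PS d} (hu : ∀ a, Conv (u a))
    (hv : ∀ a, Conv (v a)) : Conv (dot u v) :=
  Conv.sum _ fun a => (hu a).mul (hv a)

theorem Conv.monomial (α : Fin d →₀ ℕ) (c : ℝ) : Conv (MvPowerSeries.monomial α c) := by
  refine ⟨1, one_pos, ?_⟩
  unfold wnorm
  rw [tsum_eq_single α]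
  · simp [rweight]
  · intro β hβ
    classical
    rw [MvPowerSeries.coeff_monomial, if_neg hβ]
    simp

theorem Conv.C (c : ℝ) : Conv (MvPowerSeries.C c : PS d) := Conv.monomial 0 c

theorem Conv.X (i : Fin d) : Conv (MvPowerSeries.X i : PS d) := Conv.monomial _ 1

theorem Conv.integ (t : Fin d) {f : PS d} (hf : Conv f) : Conv (integ t f) := by
  apply Conv.of_eventually
  filter_upwards [hf.eventually] with r h1
  refine ne_top_of_le_ne_top (ENNReal.mul_ne_top ?_ h1) (wnorm_integ_le (rweight_add_le r) t f)
  simp [rweight]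

theorem Conv.restr (t : Fin d) {f : PS d} (hf : Conv f) : Conv (restr t f) := by
  apply Conv.of_eventually
  filter_upwards [hf.eventually] with r h1
  refine ne_top_of_le_ne_top h1 (ENNReal.tsum_le_tsum fun α => ?_)
  rw [coeff_restr]
  split_ifs <;> simp

theorem Conv.pd (i : Fin d) {f : PS d} (hf : Conv f) : Conv (pd i f) := by
  obtain ⟨r, hr, h⟩ := hf
  refine ⟨r / 2, by positivity, ne_top_of_le_ne_top
    (ENNReal.mul_ne_top (ENNReal.inv_ne_top.2 (by exact_mod_cast hr.ne')) h)
    (wnorm_le_of_coeff (C := (r : ℝ≥0∞)⁻¹) (e := id)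
    (e' := fun α => α + Finsupp.single i 1) Function.injective_id (add_left_injective _) (by simp)
    fun α => ?_)⟩
  rw [id, coeff_pd, enorm_mul]
  set a := ‖MvPowerSeries.coeff (α + Finsupp.single i 1) f‖ₑ
  have h1 : ‖(α i : ℝ) + 1‖ₑ ≤ 2 ^ α.degree := by
    rw [← Nat.cast_succ, Real.enorm_natCast]
    have h2 : α i + 1 ≤ 2 ^ α.degree :=
      (Nat.succ_le_succ (apply_le_degree α i)).trans Nat.lt_two_pow_self
    exact_mod_cast h2
  have h2 : rweight d (r / 2) α = (r : ℝ≥0∞) ^ α.degree * (2 ^ α.degree)⁻¹ := by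
    unfold rweight
    rw [ENNReal.coe_div (by simp), div_eq_mul_inv, mul_pow, ENNReal.inv_pow]
    simp
  have h3 : (2 : ℝ≥0∞) ^ α.degree * (2 ^ α.degree)⁻¹ = 1 :=
    ENNReal.mul_inv_cancel (by simp) (by finiteness)
  have h4 : (r : ℝ≥0∞)⁻¹ * r = 1 := ENNReal.inv_mul_cancel (by simpa using hr.ne') (by simp)
  rw [h2]
  calc _ ≤ a * 2 ^ α.degree * ((r : ℝ≥0∞) ^ α.degree * (2 ^ α.degree)⁻¹) := by gcongr
    _ = a * (r : ℝ≥0∞) ^ α.degree * (2 ^ α.degree * (2 ^ α.degree)⁻¹) := by ring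
    _ = a * (r : ℝ≥0∞) ^ α.degree * ((r : ℝ≥0∞)⁻¹ * r) := by rw [h3, h4]
    _ = (r : ℝ≥0∞)⁻¹ * (a * rweight d r (α + Finsupp.single i 1)) := by
      simp only [rweight, map_add, Finsupp.degree_single, pow_succ]
      ring

end Conv

/-! ### Solving quadratic systems of convergent power series -/

section system

variable {d : ℕ} {ι κ : Type*} [Fintype ι] [Fintype κ] {W : (Fin d →₀ ℕ) → ℝ≥0∞}

theorem rweight_ne_zero {r : ℝ≥0} (hr : 0 < r) (α : Fin d →₀ ℕ) : rweight d r α ≠ 0 := by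
  simp [rweight, hr.ne']

theorem vnorm_mono {W' : (Fin d →₀ ℕ) → ℝ≥0∞} (h : ∀ α, W α ≤ W' α) (y : ι → PS d) :
    vnorm W y ≤ vnorm W' y :=
  Finset.sum_le_sum fun i _ => wnorm_mono h (y i)

theorem vnorm_ne_top {y : ι → PS d} (h : ∀ i, wnorm W (y i) ≠ ∞) : vnorm W y ≠ ∞ :=
  ENNReal.sum_ne_top.2 fun i _ => h i

theorem vnorm_le_card_mul {C : ℝ≥0∞} {y : ι → PS d} (h : ∀ i, wnorm W (y i) ≤ C) :
    vnorm W y ≤ Fintype.card ι * C := by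
  refine (Finset.sum_le_card_nsmul _ _ C fun i _ => h i).trans ?_
  simp [nsmul_eq_mul]

theorem eventually_vnorm_ne_top {y : ι → PS d} (hy : ∀ i, Conv (y i)) :
    ∀ᶠ r in 𝓝[>] (0 : ℝ≥0), vnorm (rweight d r) y ≠ ∞ := by
  filter_upwards [Filter.eventually_all.2 fun i => (hy i).eventually] with r hr
  exact vnorm_ne_top hr

theorem eventually_vnorm_le {y : ι → PS d} (hy : ∀ i, Conv (y i))
    (h0 : ∀ i, MvPowerSeries.constantCoeff (y i) = 0) {δ : ℝ≥0∞} (hδ : δ ≠ 0) :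
    ∀ᶠ r in 𝓝[>] (0 : ℝ≥0), vnorm (rweight d r) y ≤ δ := by
  obtain ⟨η, hη0, hη⟩ := ENNReal.exists_nnreal_pos_mul_lt
    (ENNReal.natCast_ne_top (Fintype.card ι)) hδ
  filter_upwards [Filter.eventually_all.2 fun i =>
    (hy i).eventually_le (h0 i) (δ := η) (by exact_mod_cast hη0.ne')] with r hr
  refine (vnorm_le_card_mul hr).trans ?_
  rw [mul_comm]
  exact hη.le

/-- The vector of power series obtained by applying a constant matrix. -/
def cmul (S : ι → κ → ℝ) (y : κ → PS d) : ι → PS d := fun a => ∑ k, S a k • y k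

theorem cmul_sub (S : ι → κ → ℝ) (y z : κ → PS d) : cmul S (y - z) = cmul S y - cmul S z := by
  funext a
  simp [cmul, smul_sub]

theorem vnorm_cmul_le (S : ι → κ → ℝ) (y : κ → PS d) :
    vnorm W (cmul S y) ≤ (∑ a, ∑ k, ‖S a k‖ₑ) * vnorm W y := by
  rw [Finset.sum_mul]
  refine Finset.sum_le_sum fun a _ => (wnorm_sum_le _ _).trans ?_
  rw [Finset.sum_mul]
  refine Finset.sum_le_sum fun k _ => ?_
  rw [wnorm_smul]
  gcongr
  exact wnorm_le_vnorm y k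

/-- Existence of small solutions of quadratic perturbations of a surjective linear system. -/
theorem exists_quadratic_system (hW : ∀ α, W α ≠ 0) [DecidableEq κ]
    (A : κ → ι → ℝ) (S : ι → κ → ℝ)
    (hS : ∀ k k', ∑ a, A k a * S a k' = if k = k' then 1 else 0)
    (b : κ → PS d) (L : (ι → PS d) → κ → PS d) (Q : (ι → PS d) → (ι → PS d) → κ → PS d)
    (hL : ∀ y z, L (y - z) = L y - L z)
    (hQl : ∀ y z w, Q (y - z) w = Q y w - Q z w)
    (hQr : ∀ y z w, Q w (y - z) = Q w y - Q w z) {l q : ℝ≥0∞}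
    (hLn : ∀ y k, wnorm W (L y k) ≤ l * vnorm W y)
    (hQn : ∀ y z k, wnorm W (Q y z k) ≤ q * vnorm W y * vnorm W z)
    (hb : vnorm W b ≠ ∞)
    (hl : l * (Fintype.card κ * (∑ a, ∑ k, ‖S a k‖ₑ)) ≤ 4⁻¹)
    (hq : q * (Fintype.card κ * (∑ a, ∑ k, ‖S a k‖ₑ) ^ 2) * vnorm W b ≤ 16⁻¹) :
    ∃ w : ι → PS d, vnorm W w ≠ ∞ ∧ ∀ k, ∑ a, A k a • w a = b k + L w k + Q w w k := by
  set N : ℝ≥0∞ := ∑ a, ∑ k, ‖S a k‖ₑ with hN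
  have hNtop : N ≠ ∞ := by
    simp only [hN, Ne, ENNReal.sum_eq_top, not_exists, not_and]
    intro a _ k _
    simp
  obtain ⟨y, hy1, hy2⟩ := exists_quadratic_fixedPoint hW b (fun y => L (cmul S y))
    (fun y z => Q (cmul S y) (cmul S z))
    (fun y z => by rw [cmul_sub, hL]) (fun y z w => by rw [cmul_sub, hQl])
    (fun y z w => by rw [cmul_sub, hQr])
    (l := l * (Fintype.card κ * N)) (q := q * (Fintype.card κ * N ^ 2))
    (fun y => by
      refine (vnorm_le_card_mul (hLn (cmul S y))).trans ?_
      calc _ ≤ (Fintype.card κ : ℝ≥0∞) * (l * (N * vnorm W y)) := by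
            gcongr; exact vnorm_cmul_le S y
        _ = _ := by ring)
    (fun y z => by
      refine (vnorm_le_card_mul (hQn (cmul S y) (cmul S z))).trans ?_
      calc _ ≤ (Fintype.card κ : ℝ≥0∞) * (q * (N * vnorm W y) * (N * vnorm W z)) := by
            gcongr <;> exact vnorm_cmul_le S _
        _ = _ := by ring)
    hb hl hq
  refine ⟨cmul S y, ne_top_of_le_ne_top (ENNReal.mul_ne_top hNtop
    (ne_top_of_le_ne_top (ENNReal.mul_ne_top (by simp) hb) hy1)) (vnorm_cmul_le S y), fun k => ?_⟩
  have hk := congrFun hy2 k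
  simp only [Pi.add_apply] at hk
  rw [← hk]
  calc ∑ a, A k a • cmul S y a = ∑ k', (∑ a, A k a * S a k') • y k' := by
        simp only [cmul, Finset.smul_sum, Finset.sum_smul, smul_smul]
        exact Finset.sum_comm
    _ = y k := by simp [hS]

/-- A surjective real matrix has a right inverse. -/
theorem exists_rightInverse [DecidableEq κ] (A : κ → ι → ℝ)
    (h : ∀ c : κ → ℝ, ∃ z : ι → ℝ, ∀ k, ∑ a, A k a * z a = c k) :
    ∃ S : ι → κ → ℝ, ∀ k k', ∑ a, A k a * S a k' = if k = k' then 1 else 0 := by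
  choose z hz using fun k' : κ => h (Pi.single k' 1)
  refine ⟨fun a k' => z k' a, fun k k' => ?_⟩
  rw [hz, Pi.single_apply]

theorem exists_small (B : ℝ≥0∞) (hB : B ≠ ∞) {c : ℝ≥0∞} (hc : c ≠ 0) :
    ∃ δ : ℝ≥0, 0 < δ ∧ δ * B ≤ c := by
  obtain ⟨δ, h0, h⟩ := ENNReal.exists_nnreal_pos_mul_lt hB hc
  exact ⟨δ, h0, h.le⟩

theorem sum_enorm_ne_top (S : ι → κ → ℝ) : (∑ a, ∑ k, ‖S a k‖ₑ) ≠ ∞ := by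
  simp only [Ne, ENNReal.sum_eq_top, not_exists, not_and]
  intro a _ k _
  simp

theorem C_mul_eq_smul (c : ℝ) (f : PS d) : MvPowerSeries.C c * f = c • f :=
  (MvPowerSeries.smul_eq_C_mul f c).symm

/-- Solving linear equations together with one norm equation, near a given solution at the
origin. -/
theorem exists_conv_solution (A : κ → ι → PS d) (hA : ∀ k a, Conv (A k a)) (ρ : κ → PS d)
    (hρ : ∀ k, Conv (ρ k)) (G : PS d) (hG : Conv G) (n : ι → ℝ)
    (hAn : ∀ k, ∑ a, MvPowerSeries.constantCoeff (A k a) * n a = MvPowerSeries.constantCoeff (ρ k))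
    (hGn : ∑ a, n a * n a = MvPowerSeries.constantCoeff G)
    (hsurj : ∀ (c : κ → ℝ) (c' : ℝ), ∃ z : ι → ℝ,
      (∀ k, ∑ a, MvPowerSeries.constantCoeff (A k a) * z a = c k) ∧ ∑ a, n a * z a = c') :
    ∃ z : ι → PS d, (∀ a, Conv (z a)) ∧
      (∀ k, dot (A k) z = ρ k) ∧ dot z z = G := by
  classical
  set A₀ : Option κ → ι → ℝ := fun o a =>
    o.elim (2 * n a) fun k => MvPowerSeries.constantCoeff (A k a) with hA₀
  obtain ⟨S, hS⟩ := exists_rightInverse A₀ (by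
    intro c
    obtain ⟨z, hz1, hz2⟩ := hsurj (fun k => c (some k)) (c none / 2)
    refine ⟨z, fun o => ?_⟩
    cases o with
    | none =>
      simp only [hA₀, Option.elim_none, mul_assoc, ← Finset.mul_sum, hz2]
      ring
    | some k => exact hz1 k)
  set N : ℝ≥0∞ := ∑ a, ∑ k, ‖S a k‖ₑ with hN
  have hNtop : N ≠ ∞ := sum_enorm_ne_top S
  set n' : ι → PS d := fun a => MvPowerSeries.C (n a) with hn'
  set A' : κ → ι → PS d := fun k a => MvPowerSeries.C (MvPowerSeries.constantCoeff (A k a)) with hA'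
  have hn'c : ∀ a, Conv (n' a) := fun a => Conv.C _
  set b : Option κ → PS d := fun o =>
    o.elim (G - dot n' n') fun k => ρ k - dot (A k) n' with hb
  have hbc : ∀ o, Conv (b o) := by
    intro o
    cases o with
    | none => exact hG.sub (Conv.dot hn'c hn'c)
    | some k => exact (hρ k).sub (Conv.dot (hA k) hn'c)
  have hb0 : ∀ o, MvPowerSeries.constantCoeff (b o) = 0 := by
    intro o
    cases o with
    | none => simp [hb, constantCoeff_dot, hn', hGn]
    | some k => simp [hb, constantCoeff_dot, hn', hAn]
  obtain ⟨δ, hδ0, hδ⟩ := exists_small (Fintype.card (Option κ) * N)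
    (ENNReal.mul_ne_top (by simp) hNtop) (c := 4⁻¹) (by simp)
  obtain ⟨η, hη0, hη⟩ := exists_small (Fintype.card (Option κ) * N ^ 2)
    (ENNReal.mul_ne_top (by simp) (by finiteness)) (c := 16⁻¹) (by simp)
  have hev : ∀ᶠ r in 𝓝[>] (0 : ℝ≥0), ∀ k, vnorm (rweight d r) (A k - A' k) ≤ δ :=
    Filter.eventually_all.2 fun k => eventually_vnorm_le
      (fun a => (hA k a).sub (Conv.C _)) (fun a => by simp) (by exact_mod_cast hδ0.ne')
  obtain ⟨r, ⟨⟨hr1, hr2⟩, hr3⟩, hr0⟩ := (((eventually_vnorm_le hbc hb0 (δ := η)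
    (by exact_mod_cast hη0.ne')).and hev).and
      (eventually_vnorm_ne_top hbc)).and self_mem_nhdsWithin |>.exists
  obtain ⟨w, hw1, hw2⟩ := exists_quadratic_system (W := rweight d r) (rweight_ne_zero hr0) A₀ S hS b
    (fun w o => o.elim 0 fun k => - dot (A k - A' k) w)
    (fun w z o => o.elim (- dot w z) fun _ => 0)
    (by
      intro y z
      funext o
      cases o <;> simp only [Option.elim_none, Option.elim_some, Pi.sub_apply, dot_sub_right] <;> ring)
    (by
      intro y z w
      funext o
      cases o <;> simp only [Option.elim_none, Option.elim_some, Pi.sub_apply, dot_sub_left] <;> ring)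
    (by
      intro y z w
      funext o
      cases o <;> simp only [Option.elim_none, Option.elim_some, Pi.sub_apply, dot_sub_right] <;> ring)
    (l := δ) (q := 1)
    (by
      intro y o
      cases o with
      | none => simp [wnorm_zero]
      | some k =>
        simp only [Option.elim_some, wnorm_neg]
        exact (wnorm_dot_le (rweight_add_le r) _ _).trans (by gcongr; exact hr2 k))
    (by
      intro y z o
      cases o with
      | some k => simp [wnorm_zero]
      | none =>
        simp only [Option.elim_none, wnorm_neg, one_mul]
        exact wnorm_dot_le (rweight_add_le r) _ _)
    hr3 hδ
    (by
      rw [one_mul, mul_comm]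
      exact le_trans (by gcongr) hη)
  have hwc : ∀ a, Conv (w a) := fun a =>
    ⟨r, hr0, ne_top_of_le_ne_top hw1 (wnorm_le_vnorm w a)⟩
  refine ⟨n' + w, fun a => (hn'c a).add (hwc a), fun k => ?_, ?_⟩
  · have h := hw2 (some k)
    simp only [hA₀, hb, Option.elim_some, add_zero] at h
    have h' : dot (A' k) w = ρ k - dot (A k) n' + - dot (A k - A' k) w := by
      rw [← h]
      simp [dot, hA', C_mul_eq_smul]
    rw [dot_sub_left] at h'
    rw [dot_add_right]
    linear_combination h'
  · have h := hw2 none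
    simp only [hA₀, hb, Option.elim_none, add_zero] at h
    have h' : 2 * dot n' w = G - dot n' n' + - dot w w := by
      rw [← h]
      simp only [dot, hn', C_mul_eq_smul, mul_smul, Finset.mul_sum]
      refine Finset.sum_congr rfl fun a _ => ?_
      rw [two_smul, two_mul]
    rw [dot_add_left, dot_add_right, dot_add_right, dot_comm w n']
    linear_combination h'

end system

/-! ### The Cauchy–Kovalevskaya step -/

section evolution

variable {d : ℕ} {ι κ : Type*} [Fintype ι] [Fintype κ]

/-- Local solvability of a second order evolution system for `u = U + ∫∫ w`, in which `w`
enters linearly through the rows `P k u` and quadratically with first order coefficients. -/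
theorem exists_evolution (t : Fin d) (P B B' : κ → PS d →ₗ[ℝ] PS d)
    (hP : ∀ k (r ε : ℝ≥0) f, r ≤ 1 → ε ≤ 1 → wnorm (tweight t r ε) (P k (integ t (integ t f))) ≤
      ε * wnorm (tweight t r ε) f)
    (hB : ∀ k (r ε : ℝ≥0) f, wnorm (tweight t r ε) (B k (integ t f)) ≤
      ε * wnorm (tweight t r ε) f)
    (hB' : ∀ k (r ε : ℝ≥0) f, wnorm (tweight t r ε) (B' k (integ t f)) ≤
      ε * wnorm (tweight t r ε) f)
    (U V : ι → PS d) (c : κ → PS d)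
    (hPU : ∀ k a, Conv (P k (U a))) (hBV : ∀ k a, Conv (B k (V a)))
    (hBV' : ∀ k a, Conv (B' k (V a))) (hc : ∀ k, Conv (c k))
    (hsurj : ∀ c : κ → ℝ, ∃ z : ι → ℝ, ∀ k,
      ∑ a, MvPowerSeries.constantCoeff (P k (U a)) * z a = c k) :
    ∃ w : ι → PS d, (∀ a, Conv (w a)) ∧ ∀ k,
      dot (fun a => P k (U a + integ t (integ t (w a)))) w =
        c k + dot (fun a => B k (V a + integ t (w a))) (fun a => B' k (V a + integ t (w a))) := by
  classical
  set A₀ : κ → ι → ℝ := fun k a => MvPowerSeries.constantCoeff (P k (U a)) with hA₀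
  obtain ⟨S, hS⟩ := exists_rightInverse A₀ hsurj
  set N : ℝ≥0∞ := ∑ a, ∑ k, ‖S a k‖ₑ with hN
  have hNtop : N ≠ ∞ := sum_enorm_ne_top S
  set D : κ → ι → PS d := fun k a => P k (U a) - MvPowerSeries.C (A₀ k a) with hD
  set p : κ → ι → PS d := fun k a => B k (V a) with hp
  set p' : κ → ι → PS d := fun k a => B' k (V a) with hp'
  set b : κ → PS d := fun k => c k + dot (p k) (p' k) with hb
  have hbc : ∀ k, Conv (b k) := fun k => (hc k).add (Conv.dot (hBV k) (hBV' k))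
  obtain ⟨δ, hδ0, hδ⟩ := exists_small (Fintype.card κ * N)
    (ENNReal.mul_ne_top (by simp) hNtop) (c := 8⁻¹) (by simp)
  have hev : ∀ᶠ r in 𝓝[>] (0 : ℝ≥0), ∀ k, vnorm (rweight d r) (D k) ≤ δ :=
    Filter.eventually_all.2 fun k => eventually_vnorm_le
      (fun a => (hPU k a).sub (Conv.C _)) (fun a => by simp [hA₀]) (by exact_mod_cast hδ0.ne')
  have hev1 : ∀ᶠ r in 𝓝[>] (0 : ℝ≥0), ∀ k, vnorm (rweight d r) (p k) ≠ ∞ :=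
    Filter.eventually_all.2 fun k => eventually_vnorm_ne_top (hBV k)
  have hev2 : ∀ᶠ r in 𝓝[>] (0 : ℝ≥0), ∀ k, vnorm (rweight d r) (p' k) ≠ ∞ :=
    Filter.eventually_all.2 fun k => eventually_vnorm_ne_top (hBV' k)
  have hev3 : ∀ᶠ r in 𝓝[>] (0 : ℝ≥0), r ∈ Ioc (0 : ℝ≥0) 1 := Ioc_mem_nhdsGT one_pos
  obtain ⟨r, ⟨hr0, hr1⟩, hrD, hrp, hrp', hrb⟩ := (hev3.and (hev.and (hev1.and (hev2.and
    (eventually_vnorm_ne_top hbc))))).exists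
  set M : ℝ≥0∞ := ∑ k, (vnorm (rweight d r) (p k) + vnorm (rweight d r) (p' k)) with hM
  have hMtop : M ≠ ∞ := ENNReal.sum_ne_top.2 fun k _ => ENNReal.add_ne_top.2 ⟨hrp k, hrp' k⟩
  have hMk : ∀ k, vnorm (rweight d r) (p k) + vnorm (rweight d r) (p' k) ≤ M := fun k =>
    Finset.single_le_sum (f := fun k => vnorm (rweight d r) (p k) + vnorm (rweight d r) (p' k))
      (fun _ _ => zero_le) (Finset.mem_univ k)
  obtain ⟨ε₁, hε₁0, hε₁⟩ := exists_small (M * (Fintype.card κ * N))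
    (ENNReal.mul_ne_top hMtop (ENNReal.mul_ne_top (by simp) hNtop)) (c := 8⁻¹) (by simp)
  obtain ⟨ε₂, hε₂0, hε₂⟩ := exists_small (2 * (Fintype.card κ * N ^ 2) * vnorm (rweight d r) b)
    (by finiteness) (c := 16⁻¹) (by simp)
  obtain ⟨ε, hε0, hε1, hεε₁, hεε₂⟩ : ∃ ε : ℝ≥0, 0 < ε ∧ ε ≤ 1 ∧ ε ≤ ε₁ ∧ ε ≤ ε₂ :=
    ⟨min 1 (min ε₁ ε₂), by positivity, min_le_left _ _, (min_le_right _ _).trans (min_le_left _ _),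
      (min_le_right _ _).trans (min_le_right _ _)⟩
  set W := tweight t r ε with hW
  have hWr : ∀ y : ι → PS d, vnorm W y ≤ vnorm (rweight d r) y :=
    fun y => vnorm_mono (tweight_le_rweight t r hε1) y
  have hWmul : ∀ α β, W (α + β) ≤ W α * W β := tweight_add_le t r ε
  have hBn : ∀ k (w : ι → PS d), vnorm W (fun a => B k (integ t (w a))) ≤ ε * vnorm W w :=
    fun k w => vnorm_le_of_forall fun a => hB k r ε (w a)
  have hBn' : ∀ k (w : ι → PS d), vnorm W (fun a => B' k (integ t (w a))) ≤ ε * vnorm W w :=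
    fun k w => vnorm_le_of_forall fun a => hB' k r ε (w a)
  have hPn : ∀ k (w : ι → PS d), vnorm W (fun a => P k (integ t (integ t (w a)))) ≤
      ε * vnorm W w :=
    fun k w => vnorm_le_of_forall fun a => hP k r ε (w a) hr1 hε1
  have hε1' : (ε : ℝ≥0∞) ≤ 1 := by exact_mod_cast hε1
  have hBsub : ∀ k (y z : ι → PS d), (fun a => B k (integ t ((y - z) a))) =
      (fun a => B k (integ t (y a))) - (fun a => B k (integ t (z a))) := by
    intro k y z; funext a; simp
  have hBsub' : ∀ k (y z : ι → PS d), (fun a => B' k (integ t ((y - z) a))) =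
      (fun a => B' k (integ t (y a))) - (fun a => B' k (integ t (z a))) := by
    intro k y z; funext a; simp
  have hPsub : ∀ k (y z : ι → PS d), (fun a => P k (integ t (integ t ((y - z) a)))) =
      (fun a => P k (integ t (integ t (y a)))) - (fun a => P k (integ t (integ t (z a)))) := by
    intro k y z; funext a; simp
  obtain ⟨w, hw1, hw2⟩ := exists_quadratic_system (W := W) (tweight_ne_zero t hr0 hε0) A₀ S hS b
    (fun w k => dot (p k) (fun a => B' k (integ t (w a))) +
      dot (fun a => B k (integ t (w a))) (p' k) - dot (D k) w)
    (fun w z k => dot (fun a => B k (integ t (w a))) (fun a => B' k (integ t (z a))) -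
      dot (fun a => P k (integ t (integ t (w a)))) z)
    (by
      intro y z
      funext k
      rw [Pi.sub_apply]
      simp only [hBsub, hBsub', dot_sub_left, dot_sub_right]
      ring)
    (by
      intro y z w
      funext k
      rw [Pi.sub_apply]
      simp only [hBsub, hPsub, dot_sub_left]
      ring)
    (by
      intro y z w
      funext k
      rw [Pi.sub_apply]
      simp only [hBsub', dot_sub_right]
      ring)
    (l := ε * M + δ) (q := 2 * ε)
    (by
      intro y k
      calc _ ≤ vnorm W (p k) * (ε * vnorm W y) + (ε * vnorm W y) * vnorm W (p' k) +
            vnorm W (D k) * vnorm W y := by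
            refine (wnorm_sub_le _ _).trans (add_le_add ((wnorm_add_le _ _).trans
              (add_le_add ?_ ?_)) (wnorm_dot_le hWmul _ _))
            · exact (wnorm_dot_le hWmul _ _).trans (by gcongr; exact hBn' k y)
            · exact (wnorm_dot_le hWmul _ _).trans (by gcongr; exact hBn k y)
        _ = (ε * (vnorm W (p k) + vnorm W (p' k)) + vnorm W (D k)) * vnorm W y := by ring
        _ ≤ _ := by
            gcongr
            · exact (add_le_add (hWr _) (hWr _)).trans (hMk k)
            · exact (hWr _).trans (hrD k))
    (by
      intro y z k
      calc _ ≤ (ε * vnorm W y) * (ε * vnorm W z) + (ε * vnorm W y) * vnorm W z := by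
            refine (wnorm_sub_le _ _).trans (add_le_add ?_ ?_)
            · exact (wnorm_dot_le hWmul _ _).trans (mul_le_mul' (hBn k y) (hBn' k z))
            · exact (wnorm_dot_le hWmul _ _).trans (by gcongr; exact hPn k y)
        _ ≤ (ε * vnorm W y) * (1 * vnorm W z) + (ε * vnorm W y) * vnorm W z := by gcongr
        _ = _ := by ring)
    (ne_top_of_le_ne_top hrb (vnorm_mono (tweight_le_rweight t r hε1) b))
    (by
      rw [add_mul]
      calc _ ≤ (ε₁ : ℝ≥0∞) * (M * (Fintype.card κ * N)) + δ * (Fintype.card κ * N) := by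
            rw [mul_assoc]
            gcongr
        _ ≤ 8⁻¹ + 8⁻¹ := add_le_add hε₁ hδ
        _ = 4⁻¹ := by
            have : (8⁻¹ : ℝ≥0∞) = 4⁻¹ / 2 := by
              rw [div_eq_mul_inv, ← ENNReal.mul_inv (by simp) (by simp)]; norm_num
            rw [this, ENNReal.add_halves])
    (by
      calc _ = (ε : ℝ≥0∞) * (2 * (Fintype.card κ * N ^ 2) * vnorm W b) := by ring
        _ ≤ (ε₂ : ℝ≥0∞) * (2 * (Fintype.card κ * N ^ 2) * vnorm (rweight d r) b) := by
            gcongr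
            exact vnorm_mono (tweight_le_rweight t r hε1) b
        _ ≤ _ := hε₂)
  refine ⟨w, fun a => Conv.of_tweight hr0 hε0 hε1
    (ne_top_of_le_ne_top hw1 (wnorm_le_vnorm w a)), fun k => ?_⟩
  have h := hw2 k
  have h1 : ∑ a, A₀ k a • w a = dot (fun a => P k (U a)) w - dot (D k) w := by
    rw [← dot_sub_left]
    simp [dot, hD, C_mul_eq_smul]
  have h2 : (fun a => P k (U a + integ t (integ t (w a)))) =
      (fun a => P k (U a)) + (fun a => P k (integ t (integ t (w a)))) := by
    funext a; simp
  have h3 : (fun a => B k (V a + integ t (w a))) = p k + fun a => B k (integ t (w a)) := by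
    funext a; simp [hp]
  have h4 : (fun a => B' k (V a + integ t (w a))) = p' k + fun a => B' k (integ t (w a)) := by
    funext a; simp [hp']
  rw [h1] at h
  simp only [h2, h3, h4, dot_add_left, dot_add_right]
  simp only [hb] at h
  linear_combination h

end evolution

/-! ### Extending an isometric immersion off a hyperplane -/

section extension

variable {d : ℕ} {ι : Type*}

/-- The componentwise partial derivative of a vector of power series. -/
def pdv (i : Fin d) (u : ι → PS d) : ι → PS d := fun a => pd i (u a)

theorem pdv_comm (i j : Fin d) (u : ι → PS d) : pdv i (pdv j u) = pdv j (pdv i u) :=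
  funext fun a => pd_comm i j (u a)

theorem Conv.pdv {u : ι → PS d} (i : Fin d) (hu : ∀ a, Conv (u a)) (a : ι) :
    Conv (pdv i u a) := (hu a).pd i

variable [Fintype ι]

theorem pd_dot_pdv (i : Fin d) (u v : ι → PS d) :
    pd i (dot u v) = dot (pdv i u) v + dot u (pdv i v) := pd_dot i u v

theorem exists_half (d : ℕ) : ∃ h : PS d, Conv h ∧ 2 * h = 1 := by
  refine ⟨MvPowerSeries.C (1 / 2), Conv.C _, ?_⟩
  rw [two_mul, ← map_add]
  norm_num

/-- The extension of an isometric immersion of the hyperplane `t = 0` with prescribed normal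
velocity `u₁` to an isometric immersion in one more dimension. -/
theorem exists_isometric_extension (t : Fin d) {σ τ : Type*} [Fintype σ] [Fintype τ]
    (e : σ → Fin d) (he : ∀ i, e i ≠ t) (l r : τ → σ)
    (hlr : ∀ i j, ∃ p, (l p = i ∧ r p = j) ∨ (l p = j ∧ r p = i))
    (g : Fin d → Fin d → PS d) (hsymm : ∀ i j, g i j = g j i) (hg : ∀ i j, Conv (g i j))
    (u₀ u₁ : ι → PS d) (hu₀ : ∀ a, Conv (u₀ a)) (hu₁ : ∀ a, Conv (u₁ a))
    (hr₀ : ∀ a, restr t (u₀ a) = u₀ a) (hr₁ : ∀ a, restr t (u₁ a) = u₁ a)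
    (h00 : ∀ i j, dot (pdv (e i) u₀) (pdv (e j) u₀) = restr t (g (e i) (e j)))
    (h01 : ∀ i, dot (pdv (e i) u₀) u₁ = restr t (g (e i) t))
    (h11 : dot u₁ u₁ = restr t (g t t))
    (hII : ∀ p, 2 * dot (pdv (e (l p)) (pdv (e (r p)) u₀)) u₁ =
      restr t (pd (e (l p)) (g (e (r p)) t) + pd (e (r p)) (g (e (l p)) t) -
        pd t (g (e (l p)) (e (r p)))))
    (hsurj : ∀ (x : ℝ) (y : σ → ℝ) (y' : τ → ℝ), ∃ z : ι → ℝ,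
      ∑ a, MvPowerSeries.constantCoeff (u₁ a) * z a = x ∧
      (∀ i, ∑ a, MvPowerSeries.constantCoeff (pdv (e i) u₀ a) * z a = y i) ∧
      ∀ p, ∑ a, MvPowerSeries.constantCoeff (pdv (e (l p)) (pdv (e (r p)) u₀) a) * z a = y' p) :
    ∃ u : ι → PS d, (∀ a, Conv (u a)) ∧ (∀ a, restr t (u a) = u₀ a) ∧
      (∀ a, restr t (pdv t u a) = u₁ a) ∧
      (∀ i j, dot (pdv (e i) u) (pdv (e j) u) = g (e i) (e j)) ∧
      (∀ i, dot (pdv (e i) u) (pdv t u) = g (e i) t) ∧ dot (pdv t u) (pdv t u) = g t t := by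
  obtain ⟨h, hconv, hh⟩ := exists_half d
  have hpd₀ : ∀ a, pd t (u₀ a) = 0 := fun a => by rw [← hr₀ a, pd_restr_self]
  set P : Unit ⊕ σ ⊕ τ → PS d →ₗ[ℝ] PS d := Sum.elim (fun _ => (pd t : PS d →ₗ[ℝ] PS d))
    (Sum.elim (fun i => (pd (e i) : PS d →ₗ[ℝ] PS d))
      fun p => (pd (e (l p)) : PS d →ₗ[ℝ] PS d) ∘ₗ (pd (e (r p)) : PS d →ₗ[ℝ] PS d)) with hPdef
  set B : Unit ⊕ σ ⊕ τ → PS d →ₗ[ℝ] PS d := Sum.elim (fun _ => 0)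
    (Sum.elim (fun _ => 0) fun p => (pd (e (l p)) : PS d →ₗ[ℝ] PS d)) with hBdef
  set B' : Unit ⊕ σ ⊕ τ → PS d →ₗ[ℝ] PS d := Sum.elim (fun _ => 0)
    (Sum.elim (fun _ => 0) fun p => (pd (e (r p)) : PS d →ₗ[ℝ] PS d)) with hB'def
  set c : Unit ⊕ σ ⊕ τ → PS d := Sum.elim (fun _ => h * pd t (g t t))
    (Sum.elim (fun i => pd t (g (e i) t) - h * pd (e i) (g t t))
      fun p => h * (pd t (pd (e (l p)) (g (e (r p)) t)) + pd t (pd (e (r p)) (g (e (l p)) t)) -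
        pd t (pd t (g (e (l p)) (e (r p)))) - pd (e (l p)) (pd (e (r p)) (g t t)))) with hcdef
  have hJ : ∀ i (r' ε : ℝ≥0) f, r' ≤ 1 → ε ≤ 1 →
      wnorm (tweight t r' ε) (pd (e i) (integ t (integ t f))) ≤ ε * wnorm (tweight t r' ε) f := by
    intro i r' ε f hr' hε
    have hε' : (ε : ℝ≥0∞) ≤ 1 := by exact_mod_cast hε
    calc _ ≤ ε * (1 * wnorm (tweight t r' ε) f) := by
          refine (wnorm_pd_integ_le (he i) r' ε _).trans ?_
          gcongr
          exact (wnorm_tweight_integ_le t hr' ε f).trans (by gcongr)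
      _ = _ := by rw [one_mul]
  have hU : ∀ a, Conv (u₀ a + integ t (u₁ a)) := fun a => (hu₀ a).add ((hu₁ a).integ t)
  obtain ⟨w, hw, hwk⟩ := exists_evolution t P B B'
    (by
      rintro (_ | i | p) r' ε f hr' hε
      · change wnorm _ (pd t (integ t (integ t f))) ≤ _
        rw [pd_integ_self]
        exact wnorm_tweight_integ_le t hr' ε f
      · exact hJ i r' ε f hr' hε
      · change wnorm _ (pd (e (l p)) (pd (e (r p)) (integ t (integ t f)))) ≤ _
        have hε' : (ε : ℝ≥0∞) ≤ 1 := by exact_mod_cast hε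
        rw [pd_integ_comm (he _)]
        calc _ ≤ ε * (1 * wnorm (tweight t r' ε) f) := by
              refine (wnorm_pd_integ_le (he _) r' ε _).trans ?_
              gcongr
              exact (wnorm_pd_integ_le (he _) r' ε _).trans (by gcongr)
          _ = _ := by rw [one_mul])
    (by
      rintro (_ | i | p) r' ε f
      · simp [hBdef, wnorm_zero]
      · simp [hBdef, wnorm_zero]
      · exact wnorm_pd_integ_le (he _) r' ε f)
    (by
      rintro (_ | i | p) r' ε f
      · simp [hB'def, wnorm_zero]
      · simp [hB'def, wnorm_zero]
      · exact wnorm_pd_integ_le (he _) r' ε f)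
    (fun a => u₀ a + integ t (u₁ a)) u₁ c
    (by
      rintro (_ | i | p) a
      · exact (hU a).pd t
      · exact (hU a).pd (e i)
      · exact ((hU a).pd (e (r p))).pd (e (l p)))
    (by
      rintro (_ | i | p) a
      · exact Conv.zero
      · exact Conv.zero
      · exact (hu₁ a).pd _)
    (by
      rintro (_ | i | p) a
      · exact Conv.zero
      · exact Conv.zero
      · exact (hu₁ a).pd _)
    (by
      rintro (_ | i | p)
      · exact hconv.mul ((hg _ _).pd _)
      · exact ((hg _ _).pd _).sub (hconv.mul ((hg _ _).pd _))
      · exact hconv.mul ((((((hg _ _).pd _).pd _).add (((hg _ _).pd _).pd _)).sub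
          (((hg _ _).pd _).pd _)).sub (((hg _ _).pd _).pd _)))
    (by
      intro y
      obtain ⟨z, hz1, hz2, hz3⟩ := hsurj (y (Sum.inl ())) (fun i => y (Sum.inr (Sum.inl i)))
        (fun p => y (Sum.inr (Sum.inr p)))
      refine ⟨z, ?_⟩
      rintro (_ | i | p)
      · rw [← hz1]
        refine Finset.sum_congr rfl fun a _ => ?_
        change MvPowerSeries.constantCoeff (pd t _) * _ = _
        rw [map_add, hpd₀, pd_integ_self, zero_add]
      · rw [← hz2]
        refine Finset.sum_congr rfl fun a _ => ?_
        change MvPowerSeries.constantCoeff (pd (e i) _) * _ = _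
        rw [map_add, pd_integ_comm (he i), map_add, constantCoeff_integ, add_zero]
        rfl
      · rw [← hz3]
        refine Finset.sum_congr rfl fun a _ => ?_
        change MvPowerSeries.constantCoeff (pd (e (l p)) (pd (e (r p)) _)) * _ = _
        rw [map_add, pd_integ_comm (he _), map_add, pd_integ_comm (he _), map_add,
          constantCoeff_integ, add_zero]
        rfl)
  set u : ι → PS d := fun a => u₀ a + integ t (u₁ a) + integ t (integ t (w a)) with hu
  have hut : pdv t u = fun a => u₁ a + integ t (w a) := by
    funext a
    change pd t (u₀ a + integ t (u₁ a) + integ t (integ t (w a))) = _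
    rw [map_add, map_add, hpd₀, pd_integ_self, pd_integ_self, zero_add]
  have hutt : pdv t (pdv t u) = w := by
    rw [hut]
    funext a
    change pd t (u₁ a + integ t (w a)) = _
    rw [map_add, ← hr₁ a, pd_restr_self, pd_integ_self, zero_add]
  have hru : ∀ a, restr t (u a) = u₀ a := fun a => by
    simp only [hu, map_add, restr_integ, add_zero, hr₀]
  have hrut : ∀ a, restr t (pdv t u a) = u₁ a := fun a => by
    simp only [hut, map_add, restr_integ, add_zero, hr₁]
  have hrui : ∀ i a, restr t (pdv (e i) u a) = pdv (e i) u₀ a := fun i a => by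
    rw [pdv, ← pd_restr_comm (he i), hru]
    rfl
  have hruij : ∀ i j a, restr t (pdv (e i) (pdv (e j) u) a) = pdv (e i) (pdv (e j) u₀) a :=
    fun i j a => by
      rw [pdv, ← pd_restr_comm (he i), hrui]
      rfl
  have e1 : dot (pdv t u) w = h * pd t (g t t) := by
    refine (hwk (Sum.inl ())).trans ?_
    change h * pd t (g t t) + dot (fun _ => 0) (fun _ => 0) = _
    simp [dot]
  have e2 : ∀ i, dot (pdv (e i) u) w = pd t (g (e i) t) - h * pd (e i) (g t t) := by
    intro i
    refine (hwk (Sum.inr (Sum.inl i))).trans ?_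
    change pd t (g (e i) t) - h * pd (e i) (g t t) + dot (fun _ => 0) (fun _ => 0) = _
    simp [dot]
  have e3 : ∀ p, dot (pdv (e (l p)) (pdv (e (r p)) u)) w = h *
      (pd t (pd (e (l p)) (g (e (r p)) t)) + pd t (pd (e (r p)) (g (e (l p)) t)) -
        pd t (pd t (g (e (l p)) (e (r p)))) - pd (e (l p)) (pd (e (r p)) (g t t))) +
      dot (pdv (e (l p)) (pdv t u)) (pdv (e (r p)) (pdv t u)) := by
    intro p
    rw [hut]
    exact hwk (Sum.inr (Sum.inr p))
  have Ett : dot (pdv t u) (pdv t u) = g t t := by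
    rw [← sub_eq_zero]
    refine eq_zero_of_pd_of_restr (t := t) ?_ ?_
    · rw [map_sub, pd_dot_pdv, hutt, dot_comm w, e1]
      linear_combination pd t (g t t) * hh
    · rw [map_sub, restr_dot]
      simp only [hrut]
      rw [← h11, sub_self]
  have Eit : ∀ i, dot (pdv (e i) u) (pdv t u) = g (e i) t := by
    intro i
    rw [← sub_eq_zero]
    refine eq_zero_of_pd_of_restr (t := t) ?_ ?_
    · have h1 := congrArg (pd (e i)) Ett
      rw [pd_dot_pdv, dot_comm (pdv t u)] at h1
      rw [map_sub, pd_dot_pdv, hutt, e2, pdv_comm]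
      linear_combination h * h1 - (dot (pdv (e i) (pdv t u)) (pdv t u)) * hh
    · rw [map_sub, restr_dot]
      simp only [hrut, hrui]
      rw [← h01, sub_self]
  have Ep : ∀ p, dot (pdv (e (l p)) u) (pdv (e (r p)) u) = g (e (l p)) (e (r p)) := by
    intro p
    set i := e (l p) with hi
    set j := e (r p) with hj
    have hi' : dot (pdv i u) (pdv t u) = g i t := Eit _
    have hj' : dot (pdv j u) (pdv t u) = g j t := Eit _
    have hF : pd t (dot (pdv i u) (pdv j u) - g i j) = pd i (g j t) + pd j (g i t) -
        pd t (g i j) - 2 * dot (pdv i (pdv j u)) (pdv t u) := by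
      have h1 := congrArg (pd j) hi'
      have h2 := congrArg (pd i) hj'
      rw [pd_dot_pdv] at h1 h2
      rw [map_sub, pd_dot_pdv, pdv_comm t i, pdv_comm t j, dot_comm (pdv i (pdv t u))]
      rw [pdv_comm j i] at h1
      linear_combination h1 + h2
    rw [← sub_eq_zero]
    refine eq_zero_of_pd_of_restr (t := t) ?_ ?_
    · rw [hF]
      refine eq_zero_of_pd_of_restr (t := t) ?_ ?_
      · have h1 := congrArg (fun f => pd i (pd j f)) Ett
        simp only [pd_dot_pdv, map_add] at h1
        have h2 : pd t (2 * dot (pdv i (pdv j u)) (pdv t u)) =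
            2 * (dot (pdv i (pdv j (pdv t u))) (pdv t u) + dot (pdv i (pdv j u)) w) := by
          rw [two_mul, map_add, pd_dot_pdv, hutt, pdv_comm t i, pdv_comm t j]
          ring
        rw [map_sub, map_sub, map_add, h2, e3 p, ← hi, ← hj]
        rw [dot_comm (pdv j (pdv t u)) (pdv i (pdv t u)),
          dot_comm (pdv t u) (pdv i (pdv j (pdv t u)))] at h1
        linear_combination (-1) * h1 - (pd t (pd i (g j t)) + pd t (pd j (g i t)) -
          pd t (pd t (g i j)) - pd i (pd j (g t t))) * hh
      · have h1 := hII p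
        rw [map_sub, ← h1, map_mul, restr_dot, map_ofNat]
        simp only [hrut, hi, hj, hruij]
        exact sub_self _
    · rw [map_sub, restr_dot]
      simp only [hi, hj, hrui]
      rw [← h00]
      exact sub_self _
  refine ⟨u, fun a => (hU a).add (((hw a).integ t).integ t), hru, hrut, fun i j => ?_, Eit, Ett⟩
  obtain ⟨p, ⟨rfl, rfl⟩ | ⟨rfl, rfl⟩⟩ := hlr i j
  · exact Ep p
  · rw [dot_comm, hsymm]
    exact Ep p

end extension

/-! ### Induction on the dimension -/

section induction

variable {d : ℕ}

theorem constantCoeff_pd_mul {f g : PS d} (hf : MvPowerSeries.constantCoeff f = 0)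
    (hg : MvPowerSeries.constantCoeff g = 0) (i : Fin d) :
    MvPowerSeries.constantCoeff (pd i (f * g)) = 0 := by
  rw [Derivation.leibniz]
  simp [hf, hg]

theorem constantCoeff_pd_pd_X_mul_X (i j a b : Fin d) :
    MvPowerSeries.constantCoeff (pd i (pd j (MvPowerSeries.X a * MvPowerSeries.X b : PS d))) =
      (if i = a ∧ j = b then 1 else 0) + (if j = a ∧ i = b then 1 else 0) := by
  have h : ∀ i j : Fin d, pd i (MvPowerSeries.X j : PS d) =
      MvPowerSeries.C (if i = j then 1 else 0) := by
    intro i j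
    by_cases hij : i = j
    · subst hij; simp [pd]
    · simp [pd, hij, MvPowerSeries.pderiv_X_of_ne (Ne.symm hij)]
  have h' : ∀ (i : Fin d) (c : ℝ), pd i (MvPowerSeries.C c : PS d) = 0 := by
    intro i c; simp [pd]
  simp only [Derivation.leibniz, smul_eq_mul, map_add, map_mul, h, h', mul_zero, zero_add,
    MvPowerSeries.constantCoeff_C]
  split_ifs <;> simp_all

theorem restr_X {a t : Fin d} (h : a ≠ t) :
    restr t (MvPowerSeries.X a : PS d) = MvPowerSeries.X a := by
  ext α
  rw [coeff_restr, MvPowerSeries.coeff_X]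
  by_cases hα : α = Finsupp.single a 1
  · simp [hα, h]
  · simp [hα]

/-- A metric which agrees with the Euclidean one to first order at the origin. -/
structure IsFlat (g : Fin d → Fin d → PS d) : Prop where
  symm : ∀ i j, g i j = g j i
  conv : ∀ i j, Conv (g i j)
  const : ∀ i j, MvPowerSeries.constantCoeff (g i j) = if i = j then 1 else 0
  deriv : ∀ i j k, MvPowerSeries.constantCoeff (pd k (g i j)) = 0

/-- The existence of an isometric immersion in the first `m` variables, the others being
parameters, whose first derivatives and second derivatives in the first `m - 1` variables are
linearly independent at the origin. -/
def Realizable (m : ℕ) (g : Fin d → Fin d → PS d) : Prop :=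
  ∃ (ι : Type) (_ : Fintype ι) (u : ι → PS d), Fintype.card ι = m * (m + 1) / 2 ∧
    (∀ a, Conv (u a)) ∧
    (∀ i j : Fin d, (i : ℕ) < m → (j : ℕ) < m → dot (pdv i u) (pdv j u) = g i j) ∧
    ∀ (y : Fin d → ℝ) (y' : Fin d → Fin d → ℝ), ∃ z : ι → ℝ,
      (∀ i : Fin d, (i : ℕ) < m →
        ∑ a, MvPowerSeries.constantCoeff (pdv i u a) * z a = y i) ∧
      ∀ i j : Fin d, i ≤ j → (j : ℕ) + 1 < m →
        ∑ a, MvPowerSeries.constantCoeff (pdv i (pdv j u) a) * z a = y' i j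

/-- Subtracting the metric induced by functions vanishing to second order preserves flatness. -/
theorem IsFlat.restr_sub {g : Fin d → Fin d → PS d} (hg : IsFlat g) (t : Fin d) {σ : Type*}
    [Fintype σ] (f : σ → PS d) (hf : ∀ a, Conv (f a))
    (hf1 : ∀ i a, MvPowerSeries.constantCoeff (pd i (f a)) = 0) :
    IsFlat fun i j => restr t (g i j) - dot (pdv i f) (pdv j f) where
  symm i j := by rw [hg.symm, dot_comm]
  conv i j := ((hg.conv i j).restr t).sub (Conv.dot (Conv.pdv i hf) (Conv.pdv j hf))
  const i j := by
    rw [map_sub, constantCoeff_restr, hg.const, constantCoeff_dot, Finset.sum_eq_zero, sub_zero]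
    intro a _
    simp [pdv, hf1]
  deriv i j k := by
    have h1 : MvPowerSeries.constantCoeff (pd k (restr t (g i j))) = 0 := by
      by_cases hk : k = t
      · rw [hk, pd_restr_self, map_zero]
      · rw [pd_restr_comm hk, constantCoeff_restr, hg.deriv]
    rw [map_sub, map_sub, h1, dot, map_sum, map_sum, Finset.sum_eq_zero, sub_zero]
    exact fun a _ => constantCoeff_pd_mul (hf1 i a) (hf1 j a) k

theorem card_subtype_lt {m : ℕ} (hm : m ≤ d) :
    Fintype.card {i : Fin d // (i : ℕ) < m} = m := by
  rw [Fintype.card_subtype]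
  rw [Fin.card_filter_val_lt, min_eq_right hm]

theorem realizable_zero (g : Fin d → Fin d → PS d) : Realizable 0 g :=
  ⟨Empty, inferInstance, Empty.elim, by simp, fun a => a.elim, fun i j hi => by omega,
    fun y y' => ⟨Empty.elim, fun i hi => by omega, fun i j _ hj => by omega⟩⟩

theorem realizable_succ {m : ℕ} (hm : m < d)
    (ih : ∀ g : Fin d → Fin d → PS d, IsFlat g → Realizable m g)
    {g : Fin d → Fin d → PS d} (hg : IsFlat g) : Realizable (m + 1) g := by
  set t : Fin d := ⟨m, hm⟩ with ht
  set s : Fin d := ⟨m - 1, by omega⟩ with hs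
  let σ := {i : Fin d // (i : ℕ) < m}
  let τ := {p : σ × σ // p.1 ≤ p.2}
  have hσt : ∀ i : σ, (i : Fin d) ≠ t := by
    intro i h
    have hi := i.2
    rw [h] at hi
    exact lt_irrefl m hi
  set f : σ → PS d := fun a => MvPowerSeries.X (a : Fin d) * MvPowerSeries.X s with hf
  have hfc : ∀ a, Conv (f a) := fun a => (Conv.X _).mul (Conv.X _)
  have hfr : ∀ a, restr t (f a) = f a := by
    intro a
    have hst : s ≠ t := by
      have := a.2
      simp only [hs, ht, Ne, Fin.mk.injEq]
      omega
    simp only [hf, map_mul, restr_X (hσt a), restr_X hst]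
  have hf1 : ∀ i a, MvPowerSeries.constantCoeff (pd i (f a)) = 0 := fun i a =>
    constantCoeff_pd_mul (by simp) (by simp) i
  have hf2 : ∀ i j a, MvPowerSeries.constantCoeff (pd i (pd j (f a))) =
      (if i = a ∧ j = s then 1 else 0) + (if j = a ∧ i = s then 1 else 0) := fun i j a =>
    constantCoeff_pd_pd_X_mul_X i j a s
  obtain ⟨ι, _, v, hcard, hvc, hviso, hvsurj⟩ := ih _ (hg.restr_sub t f hfc hf1)
  set u₀ : ι ⊕ σ ⊕ Unit → PS d := Sum.elim (fun a => restr t (v a)) (Sum.elim f fun _ => 0)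
    with hu₀
  have hu₀c : ∀ a, Conv (u₀ a) := by
    rintro (a | a | _)
    · exact (hvc a).restr t
    · exact hfc a
    · exact Conv.zero
  have hu₀r : ∀ a, restr t (u₀ a) = u₀ a := by
    rintro (a | a | _)
    · exact restr_restr t _
    · exact hfr a
    · exact map_zero _
  have h00 : ∀ i j : σ, dot (pdv (i : Fin d) u₀) (pdv (j : Fin d) u₀) = restr t (g i j) := by
    intro i j
    have h1 : dot (pdv (i : Fin d) u₀) (pdv (j : Fin d) u₀) =
        restr t (dot (pdv (i : Fin d) v) (pdv (j : Fin d) v)) +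
          dot (pdv (i : Fin d) f) (pdv (j : Fin d) f) := by
      rw [restr_dot]
      simp only [dot, Fintype.sum_sum_type, pdv, hu₀, Sum.elim_inl, Sum.elim_inr, map_zero,
        mul_zero, Finset.sum_const_zero, add_zero, pd_restr_comm (hσt _)]
    have h2 : restr t (dot (pdv (i : Fin d) f) (pdv (j : Fin d) f)) =
        dot (pdv (i : Fin d) f) (pdv (j : Fin d) f) := by
      rw [restr_dot]
      unfold pdv
      simp only [← pd_restr_comm (hσt _), hfr]
    rw [h1, hviso i j i.2 j.2, map_sub, restr_restr, h2, sub_add_cancel]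
  have hsurj₀ : ∀ (x : ℝ) (y : Fin d → ℝ) (y' : Fin d → Fin d → ℝ), ∃ z : ι ⊕ σ ⊕ Unit → ℝ,
      z (Sum.inr (Sum.inr ())) = x ∧
      (∀ i : Fin d, (i : ℕ) < m →
        ∑ a, MvPowerSeries.constantCoeff (pdv i u₀ a) * z a = y i) ∧
      ∀ i j : Fin d, i ≤ j → (j : ℕ) < m →
        ∑ a, MvPowerSeries.constantCoeff (pdv i (pdv j u₀) a) * z a = y' i j := by
    intro x y y'
    obtain ⟨z, hz1, hz2⟩ := hvsurj y y'
    set q : Fin d → ℝ := fun i =>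
      ∑ a, MvPowerSeries.constantCoeff (pdv i (pdv s v) a) * z a with hq
    refine ⟨Sum.elim z (Sum.elim (fun a => (y' a s - q a) / (if (a : Fin d) = s then 2 else 1))
      fun _ => x), rfl, fun i hi => ?_, fun i j hij hj => ?_⟩
    · have hit : i ≠ t := hσt ⟨i, hi⟩
      rw [← hz1 i hi]
      simp [Fintype.sum_sum_type, pdv, hu₀, hf1, pd_restr_comm hit, constantCoeff_restr]
    · have hi : (i : ℕ) < m := lt_of_le_of_lt hij hj
      have hit : i ≠ t := hσt ⟨i, hi⟩
      have hjt : j ≠ t := hσt ⟨j, hj⟩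
      simp only [Fintype.sum_sum_type, pdv, hu₀, hf2, pd_restr_comm hit, pd_restr_comm hjt,
        constantCoeff_restr, Sum.elim_inl, Sum.elim_inr, map_zero, zero_mul, Finset.sum_const_zero,
        add_zero]
      by_cases hjs : j = s
      · subst hjs
        rw [Finset.sum_eq_single (⟨i, hi⟩ : σ)]
        · change q i + _ = _
          by_cases his : i = s
          · simp [his]
            ring
          · simp [his]
        · intro b _ hb
          have hb' : i ≠ b := fun h => hb (Subtype.ext h.symm)
          by_cases his : i = s
          · simp [← his, hb']
          · simp [hb', his]
        · simp
      · have hjs' : (j : ℕ) + 1 < m := by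
          have : (j : ℕ) ≠ m - 1 := fun h => hjs (Fin.ext h)
          omega
        have his : i ≠ s := by
          rintro rfl
          have : m - 1 ≤ (j : ℕ) := hij
          omega
        rw [← hz2 i j hij hjs', Finset.sum_eq_zero (s := (Finset.univ : Finset σ)), add_zero]
        · rfl
        · intro b _
          simp [hjs, his]
  obtain ⟨h, hhc, hh⟩ := exists_half d
  have hρc : ∀ i j, Conv (pd i (g j t) + pd j (g i t) - pd t (g i j)) := fun i j =>
    (((hg.conv _ _).pd _).add ((hg.conv _ _).pd _)).sub ((hg.conv _ _).pd _)
  have hρ0 : ∀ i j, MvPowerSeries.constantCoeff (pd i (g j t) + pd j (g i t) - pd t (g i j)) = 0 :=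
    fun i j => by simp only [map_add, map_sub, hg.deriv, add_zero, sub_zero]
  set A : σ ⊕ τ → ι ⊕ σ ⊕ Unit → PS d := Sum.elim (fun i => pdv (i : Fin d) u₀)
    (fun p => pdv (p.1.1 : Fin d) (pdv (p.1.2 : Fin d) u₀)) with hA
  set ρ : σ ⊕ τ → PS d := Sum.elim (fun i => restr t (g i t))
    (fun p => restr t (h * (pd (p.1.1 : Fin d) (g p.1.2 t) + pd (p.1.2 : Fin d) (g p.1.1 t) -
      pd t (g p.1.1 p.1.2)))) with hρ
  set n : ι ⊕ σ ⊕ Unit → ℝ := Sum.elim 0 (Sum.elim 0 1) with hn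
  have hρk0 : ∀ k, MvPowerSeries.constantCoeff (ρ k) = 0 := by
    rintro (i | p)
    · simp only [hρ, Sum.elim_inl, constantCoeff_restr, hg.const, if_neg (hσt i)]
    · simp only [hρ, Sum.elim_inr, constantCoeff_restr, map_mul, hρ0, mul_zero]
  have hAr : ∀ k a, restr t (A k a) = A k a := by
    rintro (i | p) a
    · change restr t (pd _ _) = pd _ _
      rw [← pd_restr_comm (hσt i), hu₀r]
    · change restr t (pd _ (pd _ _)) = pd _ (pd _ _)
      rw [← pd_restr_comm (hσt _), ← pd_restr_comm (hσt _), hu₀r]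
  have hρr : ∀ k, restr t (ρ k) = ρ k := by
    rintro (i | p) <;> exact restr_restr t _
  have hτ : ∀ y' : τ → ℝ, ∃ y'' : Fin d → Fin d → ℝ, ∀ p : τ, y'' p.1.1 p.1.2 = y' p := by
    intro y'
    refine ⟨fun i j => if hij : ∃ (hi : (i : ℕ) < m) (hj : (j : ℕ) < m), i ≤ j then
      y' ⟨(⟨i, hij.1⟩, ⟨j, hij.2.1⟩), hij.2.2⟩ else 0, fun p => ?_⟩
    exact dif_pos (⟨p.1.1.2, p.1.2.2, p.2⟩ : ∃ (_ : ((p.1.1 : Fin d) : ℕ) < m)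
      (_ : ((p.1.2 : Fin d) : ℕ) < m), (p.1.1 : Fin d) ≤ p.1.2)
  have hσ : ∀ y : σ → ℝ, ∃ y'' : Fin d → ℝ, ∀ i : σ, y'' i = y i := by
    intro y
    refine ⟨fun i => if hi : (i : ℕ) < m then y ⟨i, hi⟩ else 0, fun i => ?_⟩
    exact dif_pos i.2
  obtain ⟨u', hu'c, hu'A, hu'G⟩ := exists_conv_solution A
    (by
      rintro (i | p) a
      · exact (hu₀c a).pd _
      · exact ((hu₀c a).pd _).pd _)
    ρ
    (by
      rintro (i | p)
      · exact (hg.conv _ _).restr t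
      · exact (hhc.mul (hρc _ _)).restr t)
    (restr t (g t t)) ((hg.conv _ _).restr t) n
    (by
      intro k
      rw [hρk0]
      rcases k with i | p <;>
        simp [Fintype.sum_sum_type, hA, hn, pdv, hu₀])
    (by simp [Fintype.sum_sum_type, hn, constantCoeff_restr, hg.const])
    (by
      intro c c'
      obtain ⟨y, hy⟩ := hσ fun i => c (Sum.inl i)
      obtain ⟨y', hy'⟩ := hτ fun p => c (Sum.inr p)
      obtain ⟨z, hz0, hz1, hz2⟩ := hsurj₀ c' y y'
      refine ⟨z, ?_, ?_⟩
      · rintro (i | p)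
        · exact (hz1 i i.2).trans (hy i)
        · exact (hz2 _ _ p.2 p.1.2.2).trans (hy' p)
      · simpa [Fintype.sum_sum_type, hn] using hz0)
  set u₁ : ι ⊕ σ ⊕ Unit → PS d := fun a => restr t (u' a) with hu₁
  have hu₁A : ∀ k, dot (A k) u₁ = ρ k := by
    intro k
    have := congrArg (restr t) (hu'A k)
    rw [restr_dot, hρr] at this
    simpa only [hAr] using this
  have hu₁G : dot u₁ u₁ = restr t (g t t) := by
    have := congrArg (restr t) hu'G
    rwa [restr_dot, restr_restr] at this
  have hsurj₁ : ∀ (x : ℝ) (y : Fin d → ℝ) (y' : Fin d → Fin d → ℝ), ∃ z : ι ⊕ σ ⊕ Unit → ℝ,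
      ∑ a, MvPowerSeries.constantCoeff (u₁ a) * z a = x ∧
      (∀ i : Fin d, (i : ℕ) < m →
        ∑ a, MvPowerSeries.constantCoeff (pdv i u₀ a) * z a = y i) ∧
      ∀ i j : Fin d, i ≤ j → (j : ℕ) < m →
        ∑ a, MvPowerSeries.constantCoeff (pdv i (pdv j u₀) a) * z a = y' i j := by
    intro x y y'
    obtain ⟨z, -, hz1, hz2⟩ := hsurj₀ 0 y y'
    have hA0 : ∀ k, ∑ a, MvPowerSeries.constantCoeff (A k a) *
        MvPowerSeries.constantCoeff (u₁ a) = 0 := by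
      intro k
      rw [← constantCoeff_dot, hu₁A, hρk0]
    have hG0 : ∑ a, MvPowerSeries.constantCoeff (u₁ a) *
        MvPowerSeries.constantCoeff (u₁ a) = 1 := by
      rw [← constantCoeff_dot, hu₁G, constantCoeff_restr, hg.const, if_pos rfl]
    set c := x - ∑ a, MvPowerSeries.constantCoeff (u₁ a) * z a with hc
    have key : ∀ w : ι ⊕ σ ⊕ Unit → ℝ,
        ∑ a, w a * (z a + c * MvPowerSeries.constantCoeff (u₁ a)) =
          ∑ a, w a * z a + c * ∑ a, w a * MvPowerSeries.constantCoeff (u₁ a) := by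
      intro w
      rw [Finset.mul_sum, ← Finset.sum_add_distrib]
      exact Finset.sum_congr rfl fun a _ => by ring
    refine ⟨fun a => z a + c * MvPowerSeries.constantCoeff (u₁ a), ?_, fun i hi => ?_,
      fun i j hij hj => ?_⟩
    · rw [key, hG0, hc]
      ring
    · rw [key, hz1 i hi]
      have := hA0 (Sum.inl ⟨i, hi⟩)
      simp only [hA, Sum.elim_inl] at this
      rw [this, mul_zero, add_zero]
    · rw [key, hz2 i j hij hj]
      have := hA0 (Sum.inr ⟨(⟨i, lt_of_le_of_lt hij hj⟩, ⟨j, hj⟩), hij⟩)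
      simp only [hA, Sum.elim_inr] at this
      rw [this, mul_zero, add_zero]
  obtain ⟨u, huc, hur, hurt, hij, hit, htt⟩ := exists_isometric_extension t
    (fun i : σ => (i : Fin d)) hσt (fun p : τ => p.1.1) (fun p => p.1.2)
    (by
      intro i j
      rcases le_total i j with hij | hij
      · exact ⟨⟨(i, j), hij⟩, Or.inl ⟨rfl, rfl⟩⟩
      · exact ⟨⟨(j, i), hij⟩, Or.inr ⟨rfl, rfl⟩⟩)
    g hg.symm hg.conv u₀ u₁ hu₀c (fun a => (hu'c a).restr t) hu₀r (fun a => restr_restr t _)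
    h00 (fun i => hu₁A (Sum.inl i)) hu₁G
    (by
      intro p
      have h1 := hu₁A (Sum.inr p)
      simp only [hA, hρ, Sum.elim_inr] at h1
      rw [h1, map_mul, ← mul_assoc]
      have h2 := congrArg (restr t) hh
      rw [map_mul, map_ofNat, map_one] at h2
      rw [h2, one_mul])
    (by
      intro x y y'
      obtain ⟨y₂, hy⟩ := hσ y
      obtain ⟨y₂', hy'⟩ := hτ y'
      obtain ⟨z, hz0, hz1, hz2⟩ := hsurj₁ x y₂ y₂'
      exact ⟨z, hz0, fun i => (hz1 i i.2).trans (hy i),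
        fun p => (hz2 _ _ p.2 p.1.2.2).trans (hy' p)⟩)
  have hcase : ∀ i : Fin d, (i : ℕ) < m + 1 → (i : ℕ) < m ∨ i = t := by
    intro i hi
    rcases Nat.lt_succ_iff_lt_or_eq.1 hi with hi | hi
    · exact Or.inl hi
    · exact Or.inr (Fin.ext hi)
  refine ⟨ι ⊕ σ ⊕ Unit, inferInstance, u, ?_, huc, ?_, ?_⟩
  · rw [Fintype.card_sum, Fintype.card_sum, hcard, card_subtype_lt hm.le, Fintype.card_unit]
    have : (m + 1) * (m + 1 + 1) = m * (m + 1) + (m + 1) * 2 := by ring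
    rw [this, Nat.add_mul_div_right _ _ (by norm_num)]
  · intro i j hi hj
    rcases hcase i hi with hi | rfl
    · rcases hcase j hj with hj | rfl
      · exact hij ⟨i, hi⟩ ⟨j, hj⟩
      · exact hit ⟨i, hi⟩
    · rcases hcase j hj with hj | rfl
      · rw [dot_comm, hg.symm]
        exact hit ⟨j, hj⟩
      · exact htt
  · intro y y'
    obtain ⟨z, hz0, hz1, hz2⟩ := hsurj₁ (y t) y y'
    refine ⟨z, fun i hi => ?_, fun i j hij hj => ?_⟩
    · rcases hcase i hi with hi | rfl
      · rw [← hz1 i hi]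
        refine Finset.sum_congr rfl fun a _ => ?_
        rw [pdv, pdv, ← hur a, pd_restr_comm (hσt ⟨i, hi⟩), constantCoeff_restr]
      · rw [← hz0]
        refine Finset.sum_congr rfl fun a _ => ?_
        rw [← hurt a, constantCoeff_restr]
    · have hj' : (j : ℕ) < m := by omega
      rw [← hz2 i j hij hj']
      refine Finset.sum_congr rfl fun a _ => ?_
      rw [pdv, pdv, pdv, pdv, ← hur a, pd_restr_comm (hσt ⟨j, hj'⟩),
        pd_restr_comm (hσt ⟨i, lt_of_le_of_lt hij hj'⟩), constantCoeff_restr]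

theorem realizable (m : ℕ) (hm : m ≤ d) {g : Fin d → Fin d → PS d} (hg : IsFlat g) :
    Realizable m g := by
  induction m generalizing g with
  | zero => exact realizable_zero g
  | succ m ih => exact realizable_succ hm (fun g hg => ih (by omega) hg) hg

end induction

/-! ### Evaluation of convergent power series -/

section ev

variable {d : ℕ}

/-- The monomial `x ^ α`. -/
def mono (α : Fin d →₀ ℕ) (x : EuclideanSpace ℝ (Fin d)) : ℝ := ∏ i, x i ^ α i

theorem mono_zero (x : EuclideanSpace ℝ (Fin d)) : mono 0 x = 1 := by simp [mono]

theorem mono_add (α β : Fin d →₀ ℕ) (x : EuclideanSpace ℝ (Fin d)) :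
    mono (α + β) x = mono α x * mono β x := by
  simp [mono, pow_add, Finset.prod_mul_distrib]

theorem mono_single (i : Fin d) (x : EuclideanSpace ℝ (Fin d)) :
    mono (Finsupp.single i 1) x = x i := by
  unfold mono
  rw [Finset.prod_eq_single i]
  · simp
  · intro j _ hj
    simp [hj]
  · simp

theorem enorm_mono_le {r : ℝ≥0} {x : EuclideanSpace ℝ (Fin d)} (hx : ‖x‖ ≤ r)
    (α : Fin d →₀ ℕ) : ‖mono α x‖ₑ ≤ rweight d r α := by
  have h : ‖mono α x‖ ≤ (r : ℝ) ^ α.degree := by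
    rw [mono, norm_prod, Finsupp.degree_eq_sum, ← Finset.prod_pow_eq_pow_sum]
    refine Finset.prod_le_prod (fun _ _ => norm_nonneg _) fun i _ => ?_
    rw [norm_pow]
    exact pow_le_pow_left₀ (norm_nonneg _) ((PiLp.norm_apply_le x i).trans hx) _
  rw [rweight, ← ENNReal.coe_pow]
  exact_mod_cast (show ‖mono α x‖₊ ≤ r ^ α.degree from by exact_mod_cast h)

/-- The sum of a power series at a point. -/
def ev (f : PS d) (x : EuclideanSpace ℝ (Fin d)) : ℝ := ∑' α, MvPowerSeries.coeff α f * mono α x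

theorem summable_norm_of_enorm {ι : Type*} {a : ι → ℝ} (h : ∑' i, ‖a i‖ₑ ≠ ∞) :
    Summable fun i => ‖a i‖ := by
  simpa using ENNReal.summable_toReal h

theorem tsum_enorm_coeff_mul_mono_le (f : PS d) {r : ℝ≥0} {x : EuclideanSpace ℝ (Fin d)}
    (hx : ‖x‖ ≤ r) :
    ∑' α, ‖MvPowerSeries.coeff α f * mono α x‖ₑ ≤ wnorm (rweight d r) f := by
  refine ENNReal.tsum_le_tsum fun α => ?_
  rw [enorm_mul]
  gcongr
  exact enorm_mono_le hx α

theorem summable_norm_ev {f : PS d} {r : ℝ≥0} (hf : wnorm (rweight d r) f ≠ ∞)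
    {x : EuclideanSpace ℝ (Fin d)} (hx : ‖x‖ ≤ r) :
    Summable fun α => ‖MvPowerSeries.coeff α f * mono α x‖ :=
  summable_norm_of_enorm (ne_top_of_le_ne_top hf (tsum_enorm_coeff_mul_mono_le f hx))

theorem Conv.eventually_summable {f : PS d} (hf : Conv f) :
    ∀ᶠ x in 𝓝 (0 : EuclideanSpace ℝ (Fin d)),
      Summable fun α => ‖MvPowerSeries.coeff α f * mono α x‖ := by
  obtain ⟨r, hr, h⟩ := hf
  filter_upwards [Metric.closedBall_mem_nhds 0 (NNReal.coe_pos.2 hr)] with x hx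
  exact summable_norm_ev h (by simpa using hx)

theorem ev_zero_right (f : PS d) : ev f 0 = MvPowerSeries.constantCoeff f := by
  rw [ev, tsum_eq_single 0]
  · simp [mono_zero]
  · intro α hα
    obtain ⟨i, hi⟩ := Finsupp.ne_iff.1 hα
    have : mono α (0 : EuclideanSpace ℝ (Fin d)) = 0 :=
      Finset.prod_eq_zero (Finset.mem_univ i) (by simpa using hi)
    rw [this, mul_zero]

theorem ev_add {f g : PS d} {x : EuclideanSpace ℝ (Fin d)}
    (hf : Summable fun α => ‖MvPowerSeries.coeff α f * mono α x‖)
    (hg : Summable fun α => ‖MvPowerSeries.coeff α g * mono α x‖) :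
    ev (f + g) x = ev f x + ev g x := by
  unfold ev
  rw [← hf.of_norm.tsum_add hg.of_norm]
  simp [add_mul]

theorem ev_mul {f g : PS d} {x : EuclideanSpace ℝ (Fin d)}
    (hf : Summable fun α => ‖MvPowerSeries.coeff α f * mono α x‖)
    (hg : Summable fun α => ‖MvPowerSeries.coeff α g * mono α x‖) :
    ev (f * g) x = ev f x * ev g x := by
  have h := Summable.tsum_mul_tsum_eq_tsum_sum_antidiagonal
    (f := fun α => MvPowerSeries.coeff α f * mono α x)
    (g := fun α => MvPowerSeries.coeff α g * mono α x) hf.of_norm hg.of_norm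
    (summable_mul_of_summable_norm (f := fun α => MvPowerSeries.coeff α f * mono α x)
      (g := fun α => MvPowerSeries.coeff α g * mono α x) hf hg)
  refine Eq.trans ?_ h.symm
  refine tsum_congr fun α => ?_
  rw [MvPowerSeries.coeff_mul, Finset.sum_mul]
  refine Finset.sum_congr rfl fun p hp => ?_
  rw [Finset.HasAntidiagonal.mem_antidiagonal] at hp
  rw [← hp, mono_add]
  ring

theorem ev_sum_eventually {ι : Type*} (s : Finset ι) {f : ι → PS d} (hf : ∀ a, Conv (f a)) :
    ∀ᶠ x in 𝓝 (0 : EuclideanSpace ℝ (Fin d)), ev (∑ a ∈ s, f a) x = ∑ a ∈ s, ev (f a) x := by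
  classical
  induction s using Finset.induction_on with
  | empty => simp [ev]
  | insert a s ha ih =>
    filter_upwards [ih, (hf a).eventually_summable, (Conv.sum s hf).eventually_summable]
      with x h1 h2 h3
    rw [Finset.sum_insert ha, Finset.sum_insert ha, ev_add h2 h3, h1]

theorem ev_dot_eventually {ι : Type*} [Fintype ι] {u v : ι → PS d} (hu : ∀ a, Conv (u a))
    (hv : ∀ a, Conv (v a)) : ∀ᶠ x in 𝓝 (0 : EuclideanSpace ℝ (Fin d)),
      ev (dot u v) x = ∑ a, ev (u a) x * ev (v a) x := by
  filter_upwards [ev_sum_eventually Finset.univ fun a => (hu a).mul (hv a),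
    Filter.eventually_all.2 fun a => (hu a).eventually_summable,
    Filter.eventually_all.2 fun a => (hv a).eventually_summable] with x h1 h2 h3
  rw [dot, h1]
  exact Finset.sum_congr rfl fun a _ => ev_mul (h2 a) (h3 a)

/-! ### Words -/

/-- The exponent of the monomial given by a word in the variables. -/
def wordExp (w : Σ n, Fin n → Fin d) : Fin d →₀ ℕ := ∑ k, Finsupp.single (w.2 k) 1

theorem mono_wordExp (w : Σ n, Fin n → Fin d) (x : EuclideanSpace ℝ (Fin d)) :
    mono (wordExp w) x = ∏ k, x (w.2 k) := by
  have h : ∀ (s : Finset (Fin w.1)), mono (∑ k ∈ s, Finsupp.single (w.2 k) 1) x =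
      ∏ k ∈ s, x (w.2 k) := by
    intro s
    classical
    induction s using Finset.induction_on with
    | empty => simp [mono_zero]
    | insert a s ha ih =>
      rw [Finset.sum_insert ha, Finset.prod_insert ha, mono_add, mono_single, ih]
  exact h _

theorem degree_wordExp (w : Σ n, Fin n → Fin d) : (wordExp w).degree = w.1 := by
  simp [wordExp]

theorem wordExp_surjective : Function.Surjective (wordExp (d := d)) := by
  intro α
  induction α using Finsupp.induction_linear with
  | zero => exact ⟨⟨0, Fin.elim0⟩, by simp [wordExp]⟩
  | add α β hα hβ =>
    obtain ⟨⟨m, v⟩, rfl⟩ := hα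
    obtain ⟨⟨n, w⟩, rfl⟩ := hβ
    exact ⟨⟨m + n, Fin.append v w⟩, by simp [wordExp, Fin.sum_univ_add]⟩
  | single i n => exact ⟨⟨n, fun _ => i⟩, by simp [wordExp]⟩

/-- The product of the coordinates selected by a word, as a multilinear form. -/
def wordForm {n : ℕ} (w : Fin n → Fin d) :
    ContinuousMultilinearMap ℝ (fun _ : Fin n => EuclideanSpace ℝ (Fin d)) ℝ :=
  (ContinuousMultilinearMap.mkPiAlgebra ℝ (Fin n) ℝ).compContinuousLinearMap
    fun k => EuclideanSpace.proj (w k)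

theorem wordForm_apply {n : ℕ} (w : Fin n → Fin d) (x : Fin n → EuclideanSpace ℝ (Fin d)) :
    wordForm w x = ∏ k, x k (w k) := by
  simp [wordForm]

theorem norm_wordForm_le {n : ℕ} (w : Fin n → Fin d) : ‖wordForm w‖ ≤ 1 := by
  refine ContinuousMultilinearMap.opNorm_le_bound zero_le_one fun x => ?_
  rw [wordForm_apply, one_mul, norm_prod]
  exact Finset.prod_le_prod (fun _ _ => norm_nonneg _) fun k _ => PiLp.norm_apply_le _ _

/-- The sum of a convergent power series is analytic at the origin. -/
theorem Conv.analyticAt {f : PS d} (hf : Conv f) : AnalyticAt ℝ (ev f) 0 := by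
  obtain ⟨r, hr, h⟩ := hf
  classical
  set canon : (Fin d →₀ ℕ) → Σ n, Fin n → Fin d := Function.surjInv wordExp_surjective
  have hcanon : ∀ α, wordExp (canon α) = α := Function.surjInv_eq wordExp_surjective
  have hinj : Function.Injective canon := Function.injective_surjInv _
  set c : (Σ n, Fin n → Fin d) → ℝ := fun w =>
    if canon (wordExp w) = w then MvPowerSeries.coeff (wordExp w) f else 0 with hc
  have hc1 : ∀ α, c (canon α) = MvPowerSeries.coeff α f := by
    intro α
    simp [hc, hcanon]
  have hc2 : ∀ w, w ∉ Set.range canon → c w = 0 := by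
    intro w hw
    exact if_neg fun h => hw ⟨_, h⟩
  have key : ∀ x : EuclideanSpace ℝ (Fin d), ‖x‖ ≤ r →
      HasSum (fun w => c w * mono (wordExp w) x) (ev f x) := by
    intro x hx
    rw [← hinj.hasSum_iff (fun w hw => by rw [hc2 w hw, zero_mul])]
    refine (summable_norm_ev h hx).of_norm.hasSum.congr_fun fun α => ?_
    simp [hc1, hcanon]
  have keyn : Summable fun w => ‖c w‖ * (r : ℝ) ^ w.1 := by
    rw [← hinj.summable_iff (fun w hw => by rw [hc2 w hw, norm_zero, zero_mul])]
    have := ENNReal.summable_toReal h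
    refine this.congr fun α => ?_
    have h1 : (canon α).1 = α.degree := by rw [← degree_wordExp, hcanon]
    simp [hc1, rweight, h1]
  let p : FormalMultilinearSeries ℝ (EuclideanSpace ℝ (Fin d)) ℝ := fun n =>
    ∑ w : Fin n → Fin d, c ⟨n, w⟩ • wordForm w
  refine ⟨p, r, ?_, by exact_mod_cast hr, ?_⟩
  · refine p.le_radius_of_summable ?_
    have h1 := (keyn.sigma)
    simp only [tsum_fintype] at h1
    refine Summable.of_nonneg_of_le (fun n => by positivity) (fun n => ?_) h1
    rw [← Finset.sum_mul]
    gcongr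
    refine (norm_sum_le _ _).trans (Finset.sum_le_sum fun w _ => ?_)
    rw [norm_smul]
    exact mul_le_of_le_one_right (norm_nonneg _) (norm_wordForm_le w)
  · intro y hy
    rw [zero_add]
    have hy' : ‖y‖ ≤ r := by
      rw [Metric.mem_eball, edist_zero_right, enorm_eq_nnnorm, ENNReal.coe_lt_coe] at hy
      exact_mod_cast hy.le
    refine ((key y hy').sigma fun n => hasSum_fintype _).congr_fun fun n => ?_
    simp only [p, _root_.sum_apply, _root_.smul_apply,
      wordForm_apply, smul_eq_mul, mono_wordExp]

theorem exists_conv_of_analyticAt {F : EuclideanSpace ℝ (Fin d) → ℝ} (hF : AnalyticAt ℝ F 0) :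
    ∃ f : PS d, Conv f ∧ ∀ᶠ x in 𝓝 (0 : EuclideanSpace ℝ (Fin d)), F x = ev f x := by
  obtain ⟨p, R, hp⟩ := hF
  obtain ⟨ρ, hρ0, hρ⟩ := ENNReal.lt_iff_exists_nnreal_btwn.1 hp.r_pos
  have hρ0' : 0 < ρ := by exact_mod_cast hρ0
  set r : ℝ≥0 := ρ / (d + 1) with hr
  have hr0 : 0 < r := by positivity
  have hrρ : (d : ℝ≥0) * r ≤ ρ := by
    rw [hr, mul_div_assoc', div_le_iff₀ (by positivity), mul_comm]
    gcongr
    simp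
  have hrρ' : r ≤ ρ := div_le_self zero_le (by simp)
  set c : (Σ n, Fin n → Fin d) → ℝ := fun w =>
    p w.1 fun k => EuclideanSpace.single (w.2 k) (1 : ℝ) with hc
  have hcn : ∀ w, ‖c w‖ₑ ≤ ‖p w.1‖ₑ := by
    intro w
    have h1 : ‖c w‖ ≤ ‖p w.1‖ := by
      refine ((p w.1).le_opNorm _).trans ?_
      simp
    rwa [enorm_le_iff_norm_le]
  have hsum : ∑' w : (Σ n, Fin n → Fin d), ‖c w‖ₑ * (r : ℝ≥0∞) ^ w.1 ≠ ∞ := by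
    have h1 : ∑' n, ‖p n‖ₑ * (ρ : ℝ≥0∞) ^ n ≠ ∞ := by
      have h2 := p.summable_nnnorm_mul_pow (lt_of_lt_of_le hρ hp.r_le)
      have h3 := ENNReal.tsum_coe_ne_top_iff_summable.2 h2
      simpa [enorm_eq_nnnorm] using h3
    refine ne_top_of_le_ne_top h1 ?_
    rw [ENNReal.tsum_sigma']
    refine ENNReal.tsum_le_tsum fun n => ?_
    rw [tsum_fintype]
    calc _ ≤ ∑ _w : Fin n → Fin d, ‖p n‖ₑ * (r : ℝ≥0∞) ^ n :=
          Finset.sum_le_sum fun w _ => by gcongr; exact hcn ⟨n, w⟩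
      _ = ‖p n‖ₑ * (((d : ℝ≥0) * r : ℝ≥0) : ℝ≥0∞) ^ n := by
          simp [mul_pow]
          ring
      _ ≤ _ := by gcongr
  have hrad : ∀ w : (Σ n, Fin n → Fin d), rweight d r (wordExp w) = (r : ℝ≥0∞) ^ w.1 := by
    intro w
    rw [rweight, degree_wordExp]
  let f : PS d := fun α => ∑' w : wordExp ⁻¹' {α}, c w
  have hf : ∀ α, MvPowerSeries.coeff α f = ∑' w : wordExp ⁻¹' {α}, c w := fun α => rfl
  refine ⟨f, ⟨r, hr0, ne_top_of_le_ne_top hsum ?_⟩, ?_⟩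
  · rw [← ENNReal.tsum_fiberwise _ wordExp]
    refine ENNReal.tsum_le_tsum fun α => ?_
    rw [hf]
    calc _ ≤ (∑' w : wordExp ⁻¹' {α}, ‖c w‖ₑ) * rweight d r α := by
          gcongr
          exact enorm_tsum_le_tsum_enorm
      _ = _ := by
          rw [← ENNReal.tsum_mul_right]
          refine tsum_congr fun w => ?_
          rw [← hrad, w.2]
  · filter_upwards [Metric.ball_mem_nhds 0 (NNReal.coe_pos.2 hr0)] with x hx
    have hx' : ‖x‖ < r := by simpa using hx
    have hs : Summable fun w => c w * mono (wordExp w) x := by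
      refine (summable_norm_of_enorm (ne_top_of_le_ne_top hsum ?_)).of_norm
      refine ENNReal.tsum_le_tsum fun w => ?_
      rw [enorm_mul, ← hrad]
      gcongr
      exact enorm_mono_le hx'.le _
    have h1 := hs.hasSum.sigma fun n => hasSum_fintype _
    have h2 : HasSum (fun n => p n fun _ => x) (F x) := by
      have := hp.hasSum (y := x) (by
        rw [Metric.mem_eball, edist_zero_right, enorm_eq_nnnorm]
        refine lt_trans ?_ hρ
        exact_mod_cast lt_of_lt_of_le hx' (by exact_mod_cast hrρ'))
      rwa [zero_add] at this
    have hpn : ∀ n, (p n fun _ => x) = ∑ w : Fin n → Fin d, c ⟨n, w⟩ * mono (wordExp ⟨n, w⟩) x := by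
      intro n
      have hx : x = ∑ i, x i • EuclideanSpace.single i (1 : ℝ) := by
        ext j
        simp [Finset.sum_apply, Pi.single_apply]
      conv_lhs => rw [hx]
      rw [ContinuousMultilinearMap.map_sum]
      refine Finset.sum_congr rfl fun w _ => ?_
      rw [ContinuousMultilinearMap.map_smul_univ, mono_wordExp, smul_eq_mul, mul_comm]
    have h3 : F x = ∑' w, c w * mono (wordExp w) x := by
      refine h2.unique ?_
      simpa only [hpn] using h1
    have h4 := hs.hasSum.tsum_fiberwise wordExp
    rw [h3, ← h4.tsum_eq, ev]
    refine tsum_congr fun α => ?_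
    rw [hf, ← tsum_mul_right]
    refine tsum_congr fun w => ?_
    rw [w.2]

end ev

/-! ### Derivatives of sums of power series -/

section deriv

variable {d : ℕ}

theorem mono_eq_mul_prod_erase (α : Fin d →₀ ℕ) (i : Fin d) (x : EuclideanSpace ℝ (Fin d)) :
    mono α x = x i ^ α i * ∏ j ∈ Finset.univ.erase i, x j ^ α j :=
  (Finset.mul_prod_erase _ _ (Finset.mem_univ i)).symm

theorem mono_tsub_single (α : Fin d →₀ ℕ) (i : Fin d) (x : EuclideanSpace ℝ (Fin d)) :
    mono (α - Finsupp.single i 1) x = x i ^ (α i - 1) * ∏ j ∈ Finset.univ.erase i, x j ^ α j := by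
  rw [mono_eq_mul_prod_erase _ i]
  congr 1
  · simp
  · refine Finset.prod_congr rfl fun j hj => ?_
    have : j ≠ i := Finset.ne_of_mem_erase hj
    simp [this]

theorem hasDerivAt_mono (α : Fin d →₀ ℕ) (i : Fin d) (x : EuclideanSpace ℝ (Fin d)) (s : ℝ) :
    HasDerivAt (fun s : ℝ => mono α (x + s • EuclideanSpace.single i (1 : ℝ)))
      (α i * mono (α - Finsupp.single i 1) (x + s • EuclideanSpace.single i (1 : ℝ))) s := by
  have h1 : ∀ s : ℝ, ∏ j ∈ Finset.univ.erase i,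
      (x + s • EuclideanSpace.single i (1 : ℝ)) j ^ α j = ∏ j ∈ Finset.univ.erase i, x j ^ α j := by
    intro s
    refine Finset.prod_congr rfl fun j hj => ?_
    have : j ≠ i := Finset.ne_of_mem_erase hj
    simp [this]
  have h2 : ∀ s : ℝ, (x + s • EuclideanSpace.single i (1 : ℝ)) i = x i + s := by
    intro s; simp
  simp only [mono_tsub_single]
  simp only [mono_eq_mul_prod_erase _ i, h1, h2]
  have h3 : ∀ (a c : ℝ) (n : ℕ),
      HasDerivAt (fun s : ℝ => (a + s) ^ n * c) (n * ((a + s) ^ (n - 1) * c)) s := by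
    intro a c n
    refine ((((hasDerivAt_id s).const_add a).pow n).mul_const c).congr_deriv ?_
    simp [mul_assoc]
  exact h3 _ _ _

theorem Conv.fderiv_ev {f : PS d} (hf : Conv f) (i : Fin d) :
    ∀ᶠ x in 𝓝 (0 : EuclideanSpace ℝ (Fin d)),
      fderiv ℝ (ev f) x (EuclideanSpace.single i 1) = ev (JanetCartan.pd i f) x := by
  obtain ⟨r, ⟨h1, h2⟩, hr⟩ :=
    ((hf.eventually.and (hf.pd i).eventually).and self_mem_nhdsWithin).exists
  have hr0 : 0 < (r : ℝ) := by exact_mod_cast hr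
  have hinj : Function.Injective fun β : Fin d →₀ ℕ => β + Finsupp.single i 1 :=
    add_left_injective _
  have hrange : ∀ α : Fin d →₀ ℕ, α ∉ Set.range (fun β : Fin d →₀ ℕ => β + Finsupp.single i 1) →
      α i = 0 := by
    intro α hα
    by_contra h
    exact hα ⟨_, (eq_add_single_of_ne_zero h).symm⟩
  set u : (Fin d →₀ ℕ) → ℝ := fun α =>
    ‖MvPowerSeries.coeff α f‖ * (α i * (r : ℝ) ^ (α - Finsupp.single i 1).degree) with hu
  have hus : Summable u := by
    rw [← hinj.summable_iff (fun α hα => by simp [hu, hrange α hα])]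
    refine (ENNReal.summable_toReal h2).congr fun β => ?_
    have h3 : ‖(β i : ℝ) + 1‖ = β i + 1 := Real.norm_of_nonneg (by positivity)
    simp only [hu, coeff_pd, rweight, Function.comp, ENNReal.toReal_mul, toReal_enorm,
      ENNReal.toReal_pow, ENNReal.coe_toReal, norm_mul, h3]
    simp
    ring
  filter_upwards [hf.analyticAt.eventually_analyticAt,
    Metric.ball_mem_nhds 0 (half_pos hr0)] with x hxa hx
  have hx' : ‖x‖ < r / 2 := by simpa using hx
  have hy : ∀ s ∈ Metric.ball (0 : ℝ) (r / 2),
      ‖x + s • EuclideanSpace.single i (1 : ℝ)‖ ≤ r := by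
    intro s hs
    have hs' : ‖s‖ < r / 2 := by simpa using hs
    refine (norm_add_le _ _).trans ?_
    rw [norm_smul]
    simp only [PiLp.norm_single, norm_one, mul_one]
    linarith
  have h0 : (0 : ℝ) ∈ Metric.ball (0 : ℝ) (r / 2) := Metric.mem_ball_self (half_pos hr0)
  have hd := hasDerivAt_tsum_of_isPreconnected
    (g := fun α (s : ℝ) => MvPowerSeries.coeff α f *
      mono α (x + s • EuclideanSpace.single i (1 : ℝ)))
    (g' := fun α (s : ℝ) => MvPowerSeries.coeff α f *
      (α i * mono (α - Finsupp.single i 1) (x + s • EuclideanSpace.single i (1 : ℝ))))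
    hus Metric.isOpen_ball (convex_ball (0 : ℝ) (r / 2)).isPreconnected
    (fun α s _ => (hasDerivAt_mono α i x s).const_mul _)
    (fun α s hs => by
      rw [norm_mul, norm_mul, Real.norm_natCast]
      have h5 := enorm_mono_le (hy s hs) (α - Finsupp.single i 1)
      have h6 : ‖mono (α - Finsupp.single i 1) (x + s • EuclideanSpace.single i (1 : ℝ))‖ ≤
          (r : ℝ) ^ (α - Finsupp.single i 1).degree := by
        have := ENNReal.toReal_mono (by simp [rweight]) h5
        simpa [rweight] using this
      simp only [hu]
      gcongr)
    h0 (by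
      have := (summable_norm_ev h1 (hy 0 h0)).of_norm
      exact this) h0
  have hc : HasDerivAt (fun s : ℝ => ev f (x + s • EuclideanSpace.single i (1 : ℝ)))
      (fderiv ℝ (ev f) x (EuclideanSpace.single i 1)) 0 := by
    have h7 : HasDerivAt (fun s : ℝ => x + s • EuclideanSpace.single i (1 : ℝ))
        (EuclideanSpace.single i (1 : ℝ)) 0 := by
      simpa using ((hasDerivAt_id (0 : ℝ)).smul_const
        (EuclideanSpace.single i (1 : ℝ))).const_add x
    have h8 : HasFDerivAt (ev f) (fderiv ℝ (ev f) x)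
        (x + (0 : ℝ) • EuclideanSpace.single i (1 : ℝ)) := by
      simpa using hxa.differentiableAt.hasFDerivAt
    exact h8.comp_hasDerivAt 0 h7
  rw [hc.unique hd, ev, ← hinj.tsum_eq]
  · refine tsum_congr fun β => ?_
    rw [coeff_pd]
    simp
    ring
  · intro α hα
    by_contra h
    exact hα (by simp [hrange α h])

end deriv

/-! ### Jacobian matrices -/

section Jac

variable {d m n : ℕ}

theorem Jac_apply {u : EuclideanSpace ℝ (Fin d) → EuclideanSpace ℝ (Fin n)}
    {x : EuclideanSpace ℝ (Fin d)} (hu : DifferentiableAt ℝ u x) (a : Fin n) (j : Fin d) :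
    Jac u x a j = fderiv ℝ (fun y => u y a) x (EuclideanSpace.single j 1) := by
  have h := ((EuclideanSpace.proj (𝕜 := ℝ) (ι := Fin n) a : EuclideanSpace ℝ (Fin n) →L[ℝ] ℝ).hasFDerivAt.comp x
    hu.hasFDerivAt).fderiv
  have h' : fderiv ℝ (fun y => u y a) x =
      (EuclideanSpace.proj (𝕜 := ℝ) (ι := Fin n) a : EuclideanSpace ℝ (Fin n) →L[ℝ] ℝ).comp (fderiv ℝ u x) := h
  rw [h']
  rfl

theorem fderiv_apply_eq_sum (u : EuclideanSpace ℝ (Fin d) → EuclideanSpace ℝ (Fin n))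
    (x v : EuclideanSpace ℝ (Fin d)) (a : Fin n) :
    fderiv ℝ u x v a = ∑ k, Jac u x a k * v k := by
  have hv : v = ∑ k, v k • EuclideanSpace.single k (1 : ℝ) := by
    ext j
    simp [Finset.sum_apply, Pi.single_apply]
  conv_lhs => rw [hv]
  simp [Jac, mul_comm]

theorem Jac_comp {v : EuclideanSpace ℝ (Fin m) → EuclideanSpace ℝ (Fin n)}
    {φ : EuclideanSpace ℝ (Fin d) → EuclideanSpace ℝ (Fin m)} {x : EuclideanSpace ℝ (Fin d)}
    (hv : DifferentiableAt ℝ v (φ x)) (hφ : DifferentiableAt ℝ φ x) :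
    Jac (fun y => v (φ y)) x = Jac v (φ x) * Jac φ x := by
  ext a j
  have h : fderiv ℝ (fun y => v (φ y)) x = (fderiv ℝ v (φ x)).comp (fderiv ℝ φ x) :=
    fderiv_comp x hv hφ
  rw [Jac, of_apply, h, ContinuousLinearMap.comp_apply, fderiv_apply_eq_sum, Matrix.mul_apply]
  rfl

theorem Jac_eq_one_of_eventuallyEq {φ : EuclideanSpace ℝ (Fin d) → EuclideanSpace ℝ (Fin d)}
    {x : EuclideanSpace ℝ (Fin d)} (h : ∀ᶠ y in 𝓝 x, φ y = y) : Jac φ x = 1 := by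
  have h' : fderiv ℝ φ x = ContinuousLinearMap.id ℝ _ := by
    rw [Filter.EventuallyEq.fderiv_eq (f := fun y => y) h]
    exact fderiv_id
  ext a j
  rw [Jac, of_apply, h']
  simp [Matrix.one_apply]

theorem analyticAt_toLp {ι : Type*} [Fintype ι] {E : Type*} [NormedAddCommGroup E]
    [NormedSpace ℝ E] {u : ι → E → ℝ} {x : E} (h : ∀ a, AnalyticAt ℝ (u a) x) :
    AnalyticAt ℝ (fun y => WithLp.toLp 2 fun a => u a y : E → EuclideanSpace ℝ ι) x :=
  ((PiLp.continuousLinearEquiv 2 ℝ (fun _ : ι => ℝ)).symm.toContinuousLinearMap.analyticAt _).comp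
    (analyticAt_pi_iff.2 h)

theorem AnalyticAt.entry {E : Type*} [NormedAddCommGroup E] [NormedSpace ℝ E]
    {g : E → Matrix (Fin m) (Fin n) ℝ} {x : E} (h : AnalyticAt ℝ g x) (i : Fin m) (j : Fin n) :
    AnalyticAt ℝ (fun y => g y i j) x :=
  analyticAt_pi_iff.1 (analyticAt_pi_iff.1 h i) j

/-- The existence of a local analytic isometric immersion into the Janet dimension. -/
def LocallyImmersible (g : EuclideanSpace ℝ (Fin d) → Matrix (Fin d) (Fin d) ℝ)
    (p : EuclideanSpace ℝ (Fin d)) : Prop :=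
  ∃ u : EuclideanSpace ℝ (Fin d) → EuclideanSpace ℝ (Fin (d * (d + 1) / 2)),
    AnalyticAt ℝ u p ∧ ∀ᶠ x in 𝓝 p, (Jac u x)ᵀ * Jac u x = g x

theorem LocallyImmersible.of_pullback {g : EuclideanSpace ℝ (Fin d) → Matrix (Fin d) (Fin d) ℝ}
    {ψ : EuclideanSpace ℝ (Fin d) → EuclideanSpace ℝ (Fin d)} {q : EuclideanSpace ℝ (Fin d)}
    (hψ : AnalyticAt ℝ ψ q) {L : EuclideanSpace ℝ (Fin d) ≃L[ℝ] EuclideanSpace ℝ (Fin d)}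
    (hL : fderiv ℝ ψ q = L)
    (h : LocallyImmersible (fun x => (Jac ψ x)ᵀ * g (ψ x) * Jac ψ x) q) :
    LocallyImmersible g (ψ q) := by
  obtain ⟨v, hv, hvg⟩ := h
  have hs : HasStrictFDerivAt ψ (L : EuclideanSpace ℝ (Fin d) →L[ℝ] EuclideanSpace ℝ (Fin d)) q :=
    hL ▸ hψ.hasStrictFDerivAt
  set φ := hs.localInverse ψ L q with hφdef
  have hφ : AnalyticAt ℝ φ (ψ q) :=
    (hs.toOpenPartialHomeomorph ψ).analyticAt_symm' hs.mem_toOpenPartialHomeomorph_source hψ hL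
  have hφq : φ (ψ q) = q := hs.localInverse_apply_image
  have hcont : Filter.Tendsto φ (𝓝 (ψ q)) (𝓝 q) := by
    have := hφ.continuousAt.tendsto
    rwa [hφq] at this
  refine ⟨fun y => v (φ y), AnalyticAt.comp (by rwa [hφq]) hφ, ?_⟩
  filter_upwards [hφ.eventually_analyticAt, hcont.eventually hv.eventually_analyticAt,
    hcont.eventually hψ.eventually_analyticAt, hcont.eventually hvg,
    hs.eventually_right_inverse.eventually_nhds, hs.eventually_right_inverse]
    with y h1 h2 h3 h4 h5 h6
  have h6' : ψ (φ y) = y := h6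
  have h7 : Jac ψ (φ y) * Jac φ y = 1 := by
    rw [← Jac_comp h3.differentiableAt h1.differentiableAt]
    exact Jac_eq_one_of_eventuallyEq h5
  rw [Jac_comp h2.differentiableAt h1.differentiableAt]
  calc _ = (Jac φ y)ᵀ * ((Jac v (φ y))ᵀ * Jac v (φ y)) * Jac φ y := by
        simp only [transpose_mul, Matrix.mul_assoc]
    _ = (Jac ψ (φ y) * Jac φ y)ᵀ * g y * (Jac ψ (φ y) * Jac φ y) := by
        rw [h4, h6']
        simp only [transpose_mul, Matrix.mul_assoc]
    _ = g y := by rw [h7]; simp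

/-- A metric agreeing with the Euclidean one to first order is locally immersible. -/
theorem LocallyImmersible.of_flat {g : EuclideanSpace ℝ (Fin d) → Matrix (Fin d) (Fin d) ℝ}
    (hg : AnalyticAt ℝ g 0) (hsymm : ∀ᶠ x in 𝓝 0, (g x).IsSymm) (h0 : g 0 = 1)
    (h1 : ∀ i j k, fderiv ℝ (fun x => g x i j) 0 (EuclideanSpace.single k 1) = 0) :
    LocallyImmersible g 0 := by
  choose f hf hfg using fun i j => exists_conv_of_analyticAt (AnalyticAt.entry hg i j)
  set f' : Fin d → Fin d → PS d := fun i j => f (min i j) (max i j) with hf'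
  have hf'g : ∀ i j, ∀ᶠ x in 𝓝 0, g x i j = ev (f' i j) x := by
    intro i j
    filter_upwards [hfg (min i j) (max i j), hsymm] with x hx hs
    rw [← hx]
    rcases le_total i j with h | h
    · rw [min_eq_left h, max_eq_right h]
    · rw [min_eq_right h, max_eq_left h, hs.apply]
  have hflat : IsFlat f' := by
    refine ⟨fun i j => by simp only [hf', min_comm, max_comm], fun i j => hf _ _, fun i j => ?_,
      fun i j k => ?_⟩
    · rw [← ev_zero_right, ← (hf'g i j).self_of_nhds, h0, Matrix.one_apply]
    · rw [← ev_zero_right, ← ((hf _ _).fderiv_ev k).self_of_nhds, ← h1 i j k,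
        Filter.EventuallyEq.fderiv_eq (f₁ := fun x => g x i j) (hf'g i j)]
  obtain ⟨ι, _, u, hcard, hu, hug, -⟩ := realizable d le_rfl hflat
  set e : Fin (d * (d + 1) / 2) ≃ ι := (Fintype.equivFinOfCardEq hcard).symm
  refine ⟨fun x => WithLp.toLp 2 fun a => ev (u (e a)) x,
    analyticAt_toLp fun a => (hu _).analyticAt, ?_⟩
  have hua : AnalyticAt ℝ (fun x => WithLp.toLp 2 fun a => ev (u (e a)) x :
      EuclideanSpace ℝ (Fin d) → EuclideanSpace ℝ (Fin (d * (d + 1) / 2))) 0 :=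
    analyticAt_toLp fun a => (hu _).analyticAt
  filter_upwards [hua.eventually_analyticAt,
    Filter.eventually_all.2 fun i => Filter.eventually_all.2 fun j => hf'g i j,
    Filter.eventually_all.2 fun i => Filter.eventually_all.2 fun a => (hu a).fderiv_ev i,
    Filter.eventually_all.2 fun i => Filter.eventually_all.2 fun j =>
      ev_dot_eventually (u := pdv i u) (v := pdv j u) (fun a => (hu a).pd i)
        (fun a => (hu a).pd j)] with x h2 h3 h4 h5
  ext i j
  rw [h3, ← hug i j i.2 j.2, h5, Matrix.mul_apply, ← Equiv.sum_comp e]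
  refine Finset.sum_congr rfl fun a _ => ?_
  rw [Matrix.transpose_apply, Jac_apply h2.differentiableAt, Jac_apply h2.differentiableAt]
  simp only [pdv, ← h4]

end Jac

/-! ### Normal coordinates -/

section normal

variable {d : ℕ}

/-- The quadratic change of coordinates with second order coefficients `-Γ`. -/
def quadChart (Γ : Fin d → Fin d → Fin d → ℝ) (x : EuclideanSpace ℝ (Fin d)) :
    EuclideanSpace ℝ (Fin d) :=
  WithLp.toLp 2 fun a => x a - 2⁻¹ * ∑ i, ∑ j, Γ a i j * (x i * x j)

theorem quadChart_zero (Γ : Fin d → Fin d → Fin d → ℝ) : quadChart Γ 0 = 0 := by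
  ext a
  simp [quadChart]

theorem hasFDerivAt_coord (a : Fin d) (x : EuclideanSpace ℝ (Fin d)) :
    HasFDerivAt (fun y : EuclideanSpace ℝ (Fin d) => y a)
      (EuclideanSpace.proj (𝕜 := ℝ) (ι := Fin d) a : EuclideanSpace ℝ (Fin d) →L[ℝ] ℝ) x :=
  (EuclideanSpace.proj (𝕜 := ℝ) (ι := Fin d) a : EuclideanSpace ℝ (Fin d) →L[ℝ] ℝ).hasFDerivAt

theorem analyticAt_coord (a : Fin d) (x : EuclideanSpace ℝ (Fin d)) :
    AnalyticAt ℝ (fun y : EuclideanSpace ℝ (Fin d) => y a) x :=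
  (EuclideanSpace.proj (𝕜 := ℝ) (ι := Fin d) a : EuclideanSpace ℝ (Fin d) →L[ℝ] ℝ).analyticAt x

theorem analyticAt_quadChart (Γ : Fin d → Fin d → Fin d → ℝ) (x : EuclideanSpace ℝ (Fin d)) :
    AnalyticAt ℝ (quadChart Γ) x := by
  refine analyticAt_toLp fun a => (analyticAt_coord a x).sub (analyticAt_const.mul ?_)
  refine Finset.analyticAt_fun_sum _ fun i _ => Finset.analyticAt_fun_sum _ fun j _ => ?_
  exact analyticAt_const.mul ((analyticAt_coord i x).mul (analyticAt_coord j x))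

theorem Jac_quadChart {Γ : Fin d → Fin d → Fin d → ℝ} (hΓ : ∀ a i j, Γ a i j = Γ a j i)
    (x : EuclideanSpace ℝ (Fin d)) (a k : Fin d) :
    Jac (quadChart Γ) x a k = (1 : Matrix (Fin d) (Fin d) ℝ) a k - ∑ i, Γ a k i * x i := by
  rw [Jac_apply (analyticAt_quadChart Γ x).differentiableAt]
  have h := (hasFDerivAt_coord a x).sub ((HasFDerivAt.fun_sum (u := Finset.univ) fun i _ =>
    HasFDerivAt.fun_sum (u := Finset.univ) fun j _ =>
      ((hasFDerivAt_coord i x).mul (hasFDerivAt_coord j x)).const_mul (Γ a i j)).const_mul 2⁻¹)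
  have h' : HasFDerivAt (fun y => quadChart Γ y a) _ x := h
  rw [h'.fderiv]
  simp [Matrix.one_apply, Finset.sum_add_distrib]
  rw [Finset.sum_congr rfl fun i _ => by rw [hΓ a i k]]
  ring

theorem Jac_quadChart_zero {Γ : Fin d → Fin d → Fin d → ℝ} (hΓ : ∀ a i j, Γ a i j = Γ a j i) :
    Jac (quadChart Γ) 0 = 1 := by
  ext a k
  simp [Jac_quadChart hΓ]

theorem fderiv_quadChart_zero {Γ : Fin d → Fin d → Fin d → ℝ} (hΓ : ∀ a i j, Γ a i j = Γ a j i) :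
    fderiv ℝ (quadChart Γ) 0 = ContinuousLinearMap.id ℝ _ := by
  ext v a
  rw [fderiv_apply_eq_sum, Jac_quadChart_zero hΓ]
  simp [Matrix.one_apply]

theorem hasFDerivAt_Jac_quadChart {Γ : Fin d → Fin d → Fin d → ℝ}
    (hΓ : ∀ a i j, Γ a i j = Γ a j i) (x : EuclideanSpace ℝ (Fin d)) (a k : Fin d) :
    HasFDerivAt (fun y => Jac (quadChart Γ) y a k)
      (-∑ i, Γ a k i • (EuclideanSpace.proj (𝕜 := ℝ) (ι := Fin d) i :
        EuclideanSpace ℝ (Fin d) →L[ℝ] ℝ)) x := by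
  simp only [Jac_quadChart hΓ]
  have h := (HasFDerivAt.fun_sum (u := Finset.univ) fun i _ =>
    (hasFDerivAt_coord i x).const_mul (Γ a k i)).const_sub
      ((1 : Matrix (Fin d) (Fin d) ℝ) a k)
  exact h

theorem analyticAt_Jac_quadChart {Γ : Fin d → Fin d → Fin d → ℝ}
    (hΓ : ∀ a i j, Γ a i j = Γ a j i) (x : EuclideanSpace ℝ (Fin d)) (a k : Fin d) :
    AnalyticAt ℝ (fun y => Jac (quadChart Γ) y a k) x := by
  simp only [Jac_quadChart hΓ]
  exact analyticAt_const.sub (Finset.analyticAt_fun_sum _ fun i _ =>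
    analyticAt_const.mul (analyticAt_coord i x))

/-- A metric which is Euclidean at the origin is locally immersible there. -/
theorem LocallyImmersible.of_eq_one {g : EuclideanSpace ℝ (Fin d) → Matrix (Fin d) (Fin d) ℝ}
    (hg : AnalyticAt ℝ g 0) (hsymm : ∀ᶠ x in 𝓝 0, (g x).IsSymm) (h0 : g 0 = 1) :
    LocallyImmersible g 0 := by
  set D : Fin d → Fin d → Fin d → ℝ := fun k i j =>
    fderiv ℝ (fun x => g x i j) 0 (EuclideanSpace.single k 1) with hD
  have hDs : ∀ k i j, D k i j = D k j i := by
    intro k i j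
    have h : (fun x => g x i j) =ᶠ[𝓝 0] fun x => g x j i := by
      filter_upwards [hsymm] with x hx
      exact hx.apply j i
    simp only [hD, h.fderiv_eq]
  set Γ : Fin d → Fin d → Fin d → ℝ := fun a i j => 2⁻¹ * (D i j a + D j i a - D a i j) with hΓdef
  have hΓ : ∀ a i j, Γ a i j = Γ a j i := by
    intro a i j
    simp only [hΓdef, hDs a i j]
    ring
  have hψ := analyticAt_quadChart Γ 0
  have hgψ : AnalyticAt ℝ g (quadChart Γ 0) := by rwa [quadChart_zero]
  have hent : ∀ x i j, ((Jac (quadChart Γ) x)ᵀ * g (quadChart Γ x) * Jac (quadChart Γ) x) i j =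
      ∑ b, (∑ a, Jac (quadChart Γ) x a i * g (quadChart Γ x) a b) * Jac (quadChart Γ) x b j := by
    intro x i j
    simp only [Matrix.mul_apply, Matrix.transpose_apply]
  suffices h : LocallyImmersible
      (fun x => (Jac (quadChart Γ) x)ᵀ * g (quadChart Γ x) * Jac (quadChart Γ) x) 0 by
    have := LocallyImmersible.of_pullback (g := g) hψ (L := ContinuousLinearEquiv.refl ℝ _)
      (fderiv_quadChart_zero hΓ) h
    rwa [quadChart_zero] at this
  refine LocallyImmersible.of_flat ?_ ?_ ?_ ?_
  · refine analyticAt_pi_iff.2 fun i => analyticAt_pi_iff.2 fun j => ?_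
    simp only [hent]
    exact Finset.analyticAt_fun_sum _ fun b _ => (Finset.analyticAt_fun_sum _ fun a _ =>
      (analyticAt_Jac_quadChart hΓ 0 a i).mul ((AnalyticAt.entry hgψ a b).comp hψ)).mul
        (analyticAt_Jac_quadChart hΓ 0 b j)
  · have hc : Filter.Tendsto (quadChart Γ) (𝓝 0) (𝓝 0) := by
      have := hψ.continuousAt.tendsto
      rwa [quadChart_zero] at this
    filter_upwards [hc.eventually hsymm] with x hx
    rw [Matrix.IsSymm, transpose_mul, transpose_mul, transpose_transpose, hx.eq, Matrix.mul_assoc]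
  · simp only [quadChart_zero, Jac_quadChart_zero hΓ, h0]
    simp
  · intro i j k
    simp only [hent]
    have hG : ∀ a b, HasFDerivAt (fun x => g (quadChart Γ x) a b)
        (fderiv ℝ (fun x => g x a b) 0) 0 := by
      intro a b
      have h1 : HasFDerivAt (fun x => g x a b) (fderiv ℝ (fun x => g x a b) 0)
          (quadChart Γ 0) := by
        rw [quadChart_zero]
        exact (AnalyticAt.entry hg a b).differentiableAt.hasFDerivAt
      have h2 := h1.comp (0 : EuclideanSpace ℝ (Fin d)) hψ.differentiableAt.hasFDerivAt
      rw [fderiv_quadChart_zero hΓ, ContinuousLinearMap.comp_id] at h2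
      exact h2
    have h := HasFDerivAt.fun_sum (u := Finset.univ) fun b _ =>
      (HasFDerivAt.fun_sum (u := Finset.univ) fun a _ =>
        (hasFDerivAt_Jac_quadChart hΓ 0 a i).mul (hG a b)).mul (hasFDerivAt_Jac_quadChart hΓ 0 b j)
    have h' : HasFDerivAt (fun x => ∑ b, (∑ a, Jac (quadChart Γ) x a i *
        g (quadChart Γ x) a b) * Jac (quadChart Γ) x b j) _ 0 := h
    rw [h'.fderiv]
    have hD' : ∀ k i j, fderiv ℝ (fun x => g x i j) 0 (EuclideanSpace.single k 1) = D k i j :=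
      fun _ _ _ => rfl
    simp [Jac_quadChart_zero hΓ, quadChart_zero, h0, Matrix.one_apply, hD',
      Finset.sum_add_distrib]
    simp only [hΓdef]
    have e1 := hDs k j i
    have e2 := hDs i k j
    have e3 := hDs j k i
    linarith

end normal

/-! ### Reduction to a metric which is Euclidean at the origin -/

section reduction

variable {d n : ℕ}

open scoped MatrixOrder in
theorem exists_transpose_mul_mul_eq_one {G : Matrix (Fin d) (Fin d) ℝ} (hG : G.PosDef) :
    ∃ M : Matrix (Fin d) (Fin d) ℝ, IsUnit M.det ∧ Mᵀ * G * M = 1 := by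
  obtain ⟨B, hB⟩ := CStarAlgebra.nonneg_iff_eq_star_mul_self.mp hG.posSemidef.nonneg
  rw [Matrix.star_eq_conjTranspose, conjTranspose_eq_transpose_of_trivial] at hB
  have hdet : IsUnit B.det := by
    have h := hG.det_pos
    rw [hB, det_mul, det_transpose] at h
    exact isUnit_iff_ne_zero.2 fun h0 => by simp [h0] at h
  refine ⟨B⁻¹, ?_, ?_⟩
  · rw [det_nonsing_inv]
    exact hdet.ringInverse
  · rw [hB, Matrix.mul_assoc, Matrix.mul_assoc, Matrix.mul_nonsing_inv B hdet, Matrix.mul_one,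
      ← transpose_mul, Matrix.mul_nonsing_inv B hdet, transpose_one]

/-- Every analytic metric is locally immersible. -/
theorem LocallyImmersible.of_posDef {g : EuclideanSpace ℝ (Fin d) → Matrix (Fin d) (Fin d) ℝ}
    {p : EuclideanSpace ℝ (Fin d)} (hg : AnalyticAt ℝ g p) (hsymm : ∀ᶠ x in 𝓝 p, (g x).IsSymm)
    (hp : (g p).PosDef) : LocallyImmersible g p := by
  obtain ⟨M, hM, hMg⟩ := exists_transpose_mul_mul_eq_one hp
  set T : EuclideanSpace ℝ (Fin d) →L[ℝ] EuclideanSpace ℝ (Fin d) :=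
    (Matrix.toEuclideanLin M).toContinuousLinearMap with hT
  have hTinj : Function.Injective (T : EuclideanSpace ℝ (Fin d) →ₗ[ℝ] EuclideanSpace ℝ (Fin d)) := by
    intro x y hxy
    have h := congrArg (WithLp.ofLp) hxy
    have h' : M *ᵥ x.ofLp = M *ᵥ y.ofLp := h
    have hinj := Matrix.mulVec_injective_of_isUnit ((Matrix.isUnit_iff_isUnit_det M).2 hM)
    exact WithLp.ofLp_injective 2 (hinj h')
  set L : EuclideanSpace ℝ (Fin d) ≃L[ℝ] EuclideanSpace ℝ (Fin d) :=
    (LinearEquiv.ofInjectiveEndo _ hTinj).toContinuousLinearEquiv with hL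
  have hLT : (L : EuclideanSpace ℝ (Fin d) →L[ℝ] EuclideanSpace ℝ (Fin d)) = T := by
    ext x : 1
    rfl
  set ψ : EuclideanSpace ℝ (Fin d) → EuclideanSpace ℝ (Fin d) := fun x => p + T x with hψdef
  have hψ : ∀ x, AnalyticAt ℝ ψ x := fun x => analyticAt_const.add (T.analyticAt x)
  have hfd : ∀ x, fderiv ℝ ψ x = T := fun x => (T.hasFDerivAt.const_add p).fderiv
  have hJ : ∀ x, Jac ψ x = M := by
    intro x
    ext i j
    rw [Jac, of_apply, hfd]
    simp [hT, Matrix.toLpLin_apply]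
  have hψ0 : ψ 0 = p := by simp [hψdef]
  have key : LocallyImmersible (fun x => (Jac ψ x)ᵀ * g (ψ x) * Jac ψ x) 0 := by
    simp only [hJ]
    have hgψ : AnalyticAt ℝ g (ψ 0) := by rwa [hψ0]
    refine LocallyImmersible.of_eq_one ?_ ?_ ?_
    · refine analyticAt_pi_iff.2 fun i => analyticAt_pi_iff.2 fun j => ?_
      simp only [Matrix.mul_apply, Matrix.transpose_apply]
      exact Finset.analyticAt_fun_sum _ fun b _ => (Finset.analyticAt_fun_sum _ fun a _ =>
        analyticAt_const.mul ((AnalyticAt.entry hgψ a b).comp (hψ 0))).mul analyticAt_const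
    · have hc : Filter.Tendsto ψ (𝓝 0) (𝓝 p) := by
        have := (hψ 0).continuousAt.tendsto
        rwa [hψ0] at this
      filter_upwards [hc.eventually hsymm] with x hx
      rw [Matrix.IsSymm, transpose_mul, transpose_mul, transpose_transpose, hx.eq,
        Matrix.mul_assoc]
    · simp only [hψ0, hMg]
  have := LocallyImmersible.of_pullback (hψ 0) (L := L) ((hfd 0).trans hLT.symm) key
  rwa [hψ0] at this

theorem injective_fderiv_of_posDef {u : EuclideanSpace ℝ (Fin d) → EuclideanSpace ℝ (Fin n)}
    {p : EuclideanSpace ℝ (Fin d)} (h : ((Jac u p)ᵀ * Jac u p).PosDef) :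
    Function.Injective (fderiv ℝ u p) := by
  rw [injective_iff_map_eq_zero]
  intro v hv
  have hJv : Jac u p *ᵥ v.ofLp = 0 := by
    ext a
    have := fderiv_apply_eq_sum u p v a
    rw [hv] at this
    exact this.symm
  have hinj := Matrix.mulVec_injective_of_isUnit h.isUnit
  have h0 : v.ofLp = 0 := hinj (by rw [← Matrix.mulVec_mulVec, hJv]; simp)
  exact WithLp.ofLp_injective 2 h0

/-- A map whose strict derivative at a point is injective is injective near this point. -/
theorem exists_injOn_of_injective_fderiv {E F : Type*} [NormedAddCommGroup E] [NormedSpace ℝ E]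
    [CompleteSpace E] [NormedAddCommGroup F] [NormedSpace ℝ F] [FiniteDimensional ℝ F]
    {u : E → F} {u' : E →L[ℝ] F} {p : E} (hu : HasStrictFDerivAt u u' p)
    (hinj : Function.Injective u') : ∃ V ∈ 𝓝 p, Set.InjOn u V := by
  obtain ⟨R, hR⟩ := LinearMap.exists_leftInverse_of_injective (u' : E →ₗ[ℝ] F)
    (LinearMap.ker_eq_bot.2 hinj)
  have hcomp : HasStrictFDerivAt (fun x => R.toContinuousLinearMap (u x))
      ((ContinuousLinearEquiv.refl ℝ E : E ≃L[ℝ] E) : E →L[ℝ] E) p := by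
    have h := R.toContinuousLinearMap.hasStrictFDerivAt.comp p hu
    have h' : R.toContinuousLinearMap.comp u' = ContinuousLinearEquiv.refl ℝ E := by
      ext x
      exact LinearMap.congr_fun hR x
    rw [h'] at h
    exact h
  refine ⟨(hcomp.toOpenPartialHomeomorph _).source,
    (hcomp.toOpenPartialHomeomorph _).open_source.mem_nhds
      hcomp.mem_toOpenPartialHomeomorph_source, fun x hx y hy hxy => ?_⟩
  refine (hcomp.toOpenPartialHomeomorph _).injOn hx hy ?_
  simp only [HasStrictFDerivAt.toOpenPartialHomeomorph_coe, hxy]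

end reduction

end JanetCartan

/-- **Janet–Cartan theorem.** Every real-analytic Riemannian metric on an open subset of
`ℝᵈ` admits, near any point, a local real-analytic isometric embedding into `ℝ^{s_d}`,
where `s_d = d(d+1)/2` is the Janet dimension. -/
theorem janet_cartan (d : ℕ) (hd : 1 ≤ d)
    (Ω : Set (EuclideanSpace ℝ (Fin d))) (hΩ : IsOpen Ω)
    (p : EuclideanSpace ℝ (Fin d)) (hp : p ∈ Ω)
    (g : EuclideanSpace ℝ (Fin d) → Matrix (Fin d) (Fin d) ℝ)
    (hg_analytic : AnalyticOnNhd ℝ g Ω)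
    (hg_met : ∀ x ∈ Ω, (g x).IsSymm ∧ (g x).PosDef) :
    ∃ U : Set (EuclideanSpace ℝ (Fin d)), IsOpen U ∧ p ∈ U ∧ U ⊆ Ω ∧
      ∃ u : EuclideanSpace ℝ (Fin d) → EuclideanSpace ℝ (Fin (d * (d + 1) / 2)),
        AnalyticOnNhd ℝ u U ∧ Set.InjOn u U ∧
        ∀ x ∈ U, (Jac u x)ᵀ * Jac u x = g x := by
  have hpg : AnalyticAt ℝ g p := hg_analytic p hp
  have hsymm : ∀ᶠ x in nhds p, (g x).IsSymm := by
    filter_upwards [hΩ.mem_nhds hp] with x hx using (hg_met x hx).1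
  obtain ⟨u, hu, hug⟩ := JanetCartan.LocallyImmersible.of_posDef hpg hsymm (hg_met p hp).2
  have hinj : Function.Injective (fderiv ℝ u p) := by
    refine JanetCartan.injective_fderiv_of_posDef ?_
    rw [hug.self_of_nhds]
    exact (hg_met p hp).2
  obtain ⟨V, hV, hVinj⟩ := JanetCartan.exists_injOn_of_injective_fderiv hu.hasStrictFDerivAt hinj
  obtain ⟨U, hU, hUo, hpU⟩ := mem_nhds_iff.1
    (Filter.inter_mem (Filter.inter_mem (hΩ.mem_nhds hp) hV)
      (Filter.inter_mem hu.eventually_analyticAt hug))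
  exact ⟨U, hUo, hpU, fun x hx => (hU hx).1.1, u, fun x hx => (hU hx).2.1,
    hVinj.mono fun x hx => (hU hx).1.2, fun x hx => (hU hx).2.2⟩
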